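/- Let Θ ∈ (0,π), β ∈ (0,α), κ ≥ 1 and κ' ≥ 1. Let M : ℝ^d → ℝ be continuous, nonnegative, equal to 0 on ℝ^d∖Γ_Θ, twice continuously differentiable on Γ_Θ, positively homogeneous of degree β, with Δ^{α/2}M(x) existing and equal to 0 for all x ∈ Γ_Θ, and κ^{-1}·dist(θ,ℝ^d∖Γ_Θ)^{α/2} ≤ M(θ) ≤ κ·dist(θ,ℝ^d∖Γ_Θ)^{α/2} for all θ ∈ S^{d-1}. Let φ : S^{d-1} → ℝ be continuous, with its 0-homogeneous extension to ℝ^d∖{0} twice continuously differentiable in a neighborhood of every point of B_Θ, and suppose κ'^{-1}·dist(θ,ℝ^d∖Γ_Θ)^{α/2} ≤ φ(θ) ≤ κ'·dist(θ,ℝ^d∖Γ_Θ)^{α/2} for all θ ∈ S^{d-1}. Let λ ∈ (0,α). If for every η ∈ B_Θ the quantity Δ_S^{α/2}φ(η) exists, R_λφ(η) is finite and Δ_S^{α/2}φ(η) + R_λφ(η) ≥ 0, then λ ≥ β. If for every η ∈ B_Θ the quantity Δ_S^{α/2}φ(η) exists, R_λφ(η) is finite and Δ_S^{α/2}φ(η)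 + R_λφ(η) ≤ 0, then λ ≤ β. -/

import Mathlib

open MeasureTheory Metric Real Set Filter RealInnerProductSpace
open scoped ENNReal

noncomputable section

/-- Euclidean space ℝ^d. -/
abbrev Ed (d : ℕ) := EuclideanSpace ℝ (Fin d)

/-- The constant `A_{d,α}`. -/
noncomputable def fracConst (d : ℕ) (α : ℝ) : ℝ :=
  α * 2 ^ (α - 1) * π ^ (-(d : ℝ) / 2) * Real.Gamma (((d : ℝ) + α) / 2) / Real.Gamma (1 - α / 2)

/-- The fractional Laplacian `Δ^{α/2} Φ (x)` exists and equals `L`. -/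
def fracLapAt (d : ℕ) (α : ℝ) (Φ : Ed d → ℝ) (x : Ed d) (L : ℝ) : Prop :=
  Filter.Tendsto
    (fun ε : ℝ => fracConst d α *
      ∫ y in {y : Ed d | ε < ‖y - x‖}, (Φ y - Φ x) * ‖y - x‖ ^ (-(d : ℝ) - α))
    (nhdsWithin 0 (Set.Ioi 0)) (nhds L)

/-- The last coordinate of a vector in ℝ^d. -/
def lastCoord (d : ℕ) (x : Ed d) : ℝ :=
  if h : 0 < d then x ⟨d - 1, Nat.sub_lt h Nat.one_pos⟩ else 0

/-- The unit vector `e_d = (0,…,0,1)`. -/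
def eLast (d : ℕ) : Ed d :=
  if h : 0 < d then EuclideanSpace.single ⟨d - 1, Nat.sub_lt h Nat.one_pos⟩ (1 : ℝ) else 0

/-- The right circular cone `Γ_Θ` of angle `Θ`. -/
def cone (d : ℕ) (Θ : ℝ) : Set (Ed d) := {x | ‖x‖ * Real.cos Θ < lastCoord d x}

/-- The unit sphere `S^{d-1}` in ℝ^d. -/
def unitSphere (d : ℕ) : Set (Ed d) := Metric.sphere (0 : Ed d) 1

/-- The spherical cap `B_Θ`. -/
def capB (d : ℕ) (Θ : ℝ) : Set (Ed d) := {θ | θ ∈ unitSphere d ∧ Real.cos Θ < lastCoord d θ}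

/-- The surface measure `σ`: the (d-1)-dimensional Hausdorff measure. -/
noncomputable def sphMeasure (d : ℕ) : Measure (Ed d) := μH[(d : ℝ) - 1]

/-- The kernel `u_λ(t)`. -/
noncomputable def uKernel (d : ℕ) (α lam t : ℝ) : ℝ :=
  ∫ r in Set.Ioi (0 : ℝ), r ^ ((d : ℝ) + lam - 1) * (r ^ 2 - 2 * r * t + 1) ^ (-((d : ℝ) + α) / 2)

/-- The kernel `u_λ(t)` as a value in `[0,∞]`. -/
noncomputable def uKernelE (d : ℕ) (α lam t : ℝ) : ℝ≥0∞ :=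
  ∫⁻ r in Set.Ioi (0 : ℝ),
    ENNReal.ofReal (r ^ ((d : ℝ) + lam - 1) * (r ^ 2 - 2 * r * t + 1) ^ (-((d : ℝ) + α) / 2))

/-- The spherical fractional Laplacian `Δ_S^{α/2} φ (η)` exists and equals `L`. -/
def sphFracLapAt (d : ℕ) (α : ℝ) (φ : Ed d → ℝ) (η : Ed d) (L : ℝ) : Prop :=
  Filter.Tendsto
    (fun ε : ℝ => fracConst d α *
      ∫ θ in {θ : Ed d | θ ∈ unitSphere d ∧ ⟪θ, η⟫ ≤ Real.cos ε},
        (φ θ - φ η) * uKernel d α 0 ⟪θ, η⟫ ∂(sphMeasure d))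
    (nhdsWithin 0 (Set.Ioi 0)) (nhds L)

/-- The integrand of the radial operator `R_λ`. -/
noncomputable def RopIntegrand (d : ℕ) (α lam : ℝ) (φ : Ed d → ℝ) (η θ : Ed d) : ℝ :=
  φ θ * (uKernel d α lam ⟪θ, η⟫ - uKernel d α 0 ⟪θ, η⟫)

/-- The radial operator `R_λ φ (η)`. -/
noncomputable def Rop (d : ℕ) (α lam : ℝ) (φ : Ed d → ℝ) (η : Ed d) : ℝ :=
  fracConst d α * ∫ θ in unitSphere d, RopIntegrand d α lam φ η θ ∂(sphMeasure d)

/-- The modulus `ω`. -/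
noncomputable def omegaFn (α Θ : ℝ) : ℝ :=
  if α < 1 then Θ ^ α else if α = 1 then Θ * |Real.log Θ| else Θ

/-- The Euler beta function. -/
noncomputable def eulerBeta (a b : ℝ) : ℝ := Real.Gamma a * Real.Gamma b / Real.Gamma (a + b)

/-- The constant `B_{d,α}`. -/
noncomputable def Bconst (d : ℕ) (α : ℝ) : ℝ :=
  Real.Gamma (((d : ℝ) + α) / 2) / (π ^ ((3 : ℝ) / 2) * Real.Gamma (((d : ℝ) - 1 + α) / 2)) *
    Real.sin (π * α / 2) * eulerBeta (1 + α / 2) (((d : ℝ) - 1) / 2)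

/-- The constant `C_{d-1,α}`. -/
noncomputable def Cexit (d : ℕ) (α : ℝ) : ℝ :=
  Real.Gamma (((d : ℝ) - 1) / 2) /
    (2 ^ α * Real.Gamma (((d : ℝ) - 1 + α) / 2) * Real.Gamma (1 + α / 2))

/-- The constant `C̃_{d,α}`. -/
noncomputable def Ctilde (d : ℕ) (α : ℝ) : ℝ :=
  π ^ (((d : ℝ) - 1) / 2) / Real.Gamma (((d : ℝ) - 1) / 2) * Cexit d α *
    eulerBeta (1 + α / 2) (((d : ℝ) - 1) / 2)

/-- The norm `|ỹ|` of the first `d-1` coordinates of `y`. -/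
noncomputable def tnorm (d : ℕ) (y : Ed d) : ℝ :=
  Real.sqrt (∑ i : Fin d, if (i : ℕ) < d - 1 then (y i) ^ 2 else 0)

/-- The function `s_ε`. -/
noncomputable def sExit (d : ℕ) (α ε : ℝ) (y : Ed d) : ℝ :=
  Cexit d α * (max (ε ^ 2 - tnorm d y ^ 2) 0) ^ (α / 2)

/-- The cylinder `Π_ε`. -/
def cylPi (d : ℕ) (ε : ℝ) : Set (Ed d) := {y | tnorm d y < ε}

/-- The hyperplane `F = {y : y_d = 1}`. -/
def hyperF (d : ℕ) : Set (Ed d) := {y | lastCoord d y = 1}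

/-- The Riesz kernel `h(y) = |y|^{α-d}`. -/
noncomputable def rieszH (d : ℕ) (α : ℝ) (y : Ed d) : ℝ := ‖y‖ ^ (α - (d : ℝ))

/-- The inversion `T x = x/|x|²`. -/
noncomputable def inversion (d : ℕ) (x : Ed d) : Ed d := (‖x‖ ^ 2)⁻¹ • x

/-- The shifted cone `V_Θ = Γ_Θ + e_d/2`. -/
def Vcone (d : ℕ) (Θ : ℝ) : Set (Ed d) := {y | y - (1 / 2 : ℝ) • eLast d ∈ cone d Θ}

/-- The spindle `L_ε = T(V_Θ)` with `ε = tan(Θ/2)`, i.e. `Θ = 2 arctan ε`. -/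
def Lspindle (d : ℕ) (ε : ℝ) : Set (Ed d) := inversion d '' Vcone d (2 * Real.arctan ε)

/-- The curvilinear projection `y* = T(e_d/2 + (Ty - e_d/2)/(2|Ty - e_d/2|))`. -/
noncomputable def ystar (d : ℕ) (y : Ed d) : Ed d :=
  inversion d ((1 / 2 : ℝ) • eLast d +
    (2 * ‖inversion d y - (1 / 2 : ℝ) • eLast d‖)⁻¹ • (inversion d y - (1 / 2 : ℝ) • eLast d))

open scoped Classical in
/-- The function `s*_ε`. -/
noncomputable def sStar (d : ℕ) (α ε : ℝ) (y : Ed d) : ℝ :=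
  if y ∈ Lspindle d ε then Cexit d α * (max (ε ^ 2 - tnorm d (ystar d y) ^ 2) 0) ^ (α / 2)
  else 0

open scoped Classical in
/-- The function `u = K(h s*_ε)`, i.e. `u(y) = s*_ε(Ty)`, `u(0) = 0`. -/
noncomputable def uFn (d : ℕ) (α ε : ℝ) (y : Ed d) : ℝ :=
  if y = 0 then 0 else sStar d α ε (inversion d y)

/-- The spherical profile `φ_Θ`. -/
noncomputable def profileFn (d : ℕ) (α Θ : ℝ) (θ : Ed d) : ℝ :=
  2 ^ α * Cexit d α *
    (max (Real.tan (Θ / 2) ^ 2 - ‖eLast d - θ‖ ^ 2 / ‖eLast d + θ‖ ^ 2) 0) ^ (α / 2)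

/-- Laplacian on ℝ^d as the sum of pure second partial derivatives. -/
noncomputable def lapE (d : ℕ) (u : Ed d → ℝ) (x : Ed d) : ℝ :=
  ∑ i : Fin d,
    iteratedFDeriv ℝ 2 u x ![EuclideanSpace.single i (1 : ℝ), EuclideanSpace.single i (1 : ℝ)]

/-- Laplacian on ℝ^d × ℝ as the sum of the d+1 pure second partial derivatives. -/
noncomputable def lapProd (d : ℕ) (U : Ed d × ℝ → ℝ) (p : Ed d × ℝ) : ℝ :=
  (∑ i : Fin d, iteratedFDeriv ℝ 2 U p
      ![(EuclideanSpace.single i (1 : ℝ), (0 : ℝ)), (EuclideanSpace.single i (1 : ℝ), (0 : ℝ))]) +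
    iteratedFDeriv ℝ 2 U p ![((0 : Ed d), (1 : ℝ)), ((0 : Ed d), (1 : ℝ))]

/-- The Poisson kernel `P_t(x)` for the upper half-space. -/
noncomputable def poissonK (d : ℕ) (t : ℝ) (x : Ed d) : ℝ :=
  Real.Gamma (((d : ℝ) + 1) / 2) / π ^ (((d : ℝ) + 1) / 2) * t *
    (‖x‖ ^ 2 + t ^ 2) ^ (-((d : ℝ) + 1) / 2)

end

/-!
Compare the homogeneous extensions `P` of `φ` and `Q` of `ψ`, of degrees `p < q`, where
`φ ≤ C ψ` on the unit sphere. Far from the origin `P ≤ Q` and close to it `P > Q` somewhere, so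
`P - Q` has a positive maximum; rescaling moves it to a unit vector `η`, at the cost of replacing
`Q` by a multiple `a Q`. The principal value at `η` of the singular integral of `P - a Q` is then
strictly negative, so `P` and `Q` cannot be sub- and superharmonic at `η`.

The principal value is taken over complements of cones around `η`: there polar coordinates split it
into the spherical fractional Laplacian and the radial operator. That excising cones instead of
balls does not change it at a point where the function is twice differentiable needs an argument
only for the linear part of the function. The part of it orthogonal to `η` is odd under the
reflection in `ℝ η`. For the radial part, replace the linear function by the Riesz kernel
`|y|^{α-d}`, whose integral over a region symmetric under `y ↦ y / |y|²` vanishes by oddness.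
-/

/-! ### Uniformly distributed measures -/

section UniformlyDistributed

variable {X : Type*} [MetricSpace X] [MeasurableSpace X]

/-- A measure is uniformly distributed if the measure of a ball depends only on its radius. Such
measures are used to identify the surface measure of the sphere without computing it. -/
def IsUniformlyDistributed (μ : Measure X) : Prop :=
  ∀ x y r, μ (ball x r) = μ (ball y r)

variable [SecondCountableTopology X] {μ ν : Measure X}

lemma IsUniformlyDistributed.measure_ball_pos (hμ : IsUniformlyDistributed μ) (hμ0 : μ ≠ 0)
    (x : X) {r : ℝ} (hr : 0 < r) : 0 < μ (ball x r) := by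
  rw [pos_iff_ne_zero]
  intro h0
  obtain ⟨s, hs, hcover⟩ := TopologicalSpace.countable_cover_nhds
    (f := fun y : X => ball y r) (fun y => ball_mem_nhds y hr)
  refine hμ0 (Measure.measure_univ_eq_zero.1 ?_)
  rw [← hcover]
  exact (measure_biUnion_null_iff hs).2 fun y _ => by rw [hμ y x r, h0]

variable [BorelSpace X]

lemma measurable_measure_inter_ball (ν : Measure X) [SFinite ν] {s : Set X} (hs : MeasurableSet s)
    (r : ℝ) : Measurable fun x => ν (s ∩ ball x r) :=
  measurable_measure_prodMk_left <| (hs.preimage measurable_snd).inter <|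
    measurableSet_lt (measurable_snd.dist measurable_fst) measurable_const

lemma IsUniformlyDistributed.lintegral_measure_inter_ball_le [SFinite μ] [SFinite ν]
    (hμ : IsUniformlyDistributed μ) (x₀ : X) (s : Set X) (r : ℝ) :
    ∫⁻ x in s, ν (s ∩ ball x r) ∂μ ≤ μ (ball x₀ r) * ν s := by
  have hdiag : MeasurableSet {p : X × X | dist p.2 p.1 < r} :=
    measurableSet_lt (measurable_snd.dist measurable_fst) measurable_const
  calc ∫⁻ x in s, ν (s ∩ ball x r) ∂μ
      = ((μ.restrict s).prod (ν.restrict s)) {p | dist p.2 p.1 < r} := by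
        rw [Measure.prod_apply hdiag]
        refine lintegral_congr fun x => ?_
        rw [inter_comm, ← Measure.restrict_apply measurableSet_ball]
        rfl
    _ = ∫⁻ y in s, μ.restrict s (ball y r) ∂ν := by
        rw [Measure.prod_apply_symm hdiag]
        refine lintegral_congr fun y => congrArg _ ?_
        ext x
        simp only [mem_preimage, mem_ofPred_eq, mem_ball, dist_comm]
    _ ≤ ∫⁻ _ in s, μ (ball x₀ r) ∂ν := by
        refine lintegral_mono fun y => ?_
        rw [hμ x₀ y r]
        exact Measure.restrict_apply_le _ _
    _ = μ (ball x₀ r) * ν s := setLIntegral_const _ _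

lemma IsUniformlyDistributed.measure_le_liminf_mul [IsFiniteMeasure μ] [IsFiniteMeasure ν]
    (hμ : IsUniformlyDistributed μ) (hν : IsUniformlyDistributed ν) (hν0 : ν ≠ 0) (x₀ : X)
    {U : Set X} (hU : IsOpen U) {r : ℕ → ℝ} (hr : ∀ n, 0 < r n)
    (hr0 : Tendsto r atTop (nhds 0)) :
    μ U ≤ liminf (fun n => μ (ball x₀ (r n)) / ν (ball x₀ (r n))) atTop * ν U := by
  have hmeas : ∀ n, Measurable fun x => ν (U ∩ ball x (r n)) := fun n =>
    measurable_measure_inter_ball ν hU.measurableSet (r n)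
  calc μ U = ∫⁻ _ in U, 1 ∂μ := by rw [setLIntegral_const, one_mul]
    _ ≤ ∫⁻ x in U, liminf (fun n => ν (U ∩ ball x (r n)) / ν (ball x₀ (r n))) atTop ∂μ := by
        refine setLIntegral_mono_ae' hU.measurableSet (ae_of_all _ fun x hx => ?_)
        refine le_liminf_of_le (by isBoundedDefault) ?_
        obtain ⟨δ, hδ, hball⟩ := Metric.isOpen_iff.1 hU x hx
        filter_upwards [hr0.eventually (gt_mem_nhds hδ)] with n hn
        rw [inter_eq_self_of_subset_right ((ball_subset_ball hn.le).trans hball), hν x x₀,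
          ENNReal.div_self (hν.measure_ball_pos hν0 x₀ (hr n)).ne' (measure_ne_top _ _)]
    _ ≤ liminf (fun n => ∫⁻ x in U, ν (U ∩ ball x (r n)) / ν (ball x₀ (r n)) ∂μ) atTop :=
        lintegral_liminf_le fun n => (hmeas n).div_const _
    _ ≤ liminf (fun n => μ (ball x₀ (r n)) / ν (ball x₀ (r n)) * ν U) atTop := by
        refine liminf_le_liminf (Eventually.of_forall fun n => ?_)
        simp_rw [div_eq_mul_inv]
        rw [lintegral_mul_const _ (hmeas n), mul_right_comm]
        gcongr
        exact hμ.lintegral_measure_inter_ball_le x₀ U (r n)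
    _ = liminf (fun n => μ (ball x₀ (r n)) / ν (ball x₀ (r n))) atTop * ν U := by
        rw [ENNReal.liminf_mul_const_of_ne_top (measure_ne_top _ _), mul_comm]

theorem IsUniformlyDistributed.exists_eq_smul [IsFiniteMeasure μ] [IsFiniteMeasure ν]
    (hμ : IsUniformlyDistributed μ) (hν : IsUniformlyDistributed ν) (hμ0 : μ ≠ 0) (hν0 : ν ≠ 0) :
    ∃ c : ℝ≥0∞, c ≠ 0 ∧ c ≠ ∞ ∧ μ = c • ν := by
  obtain ⟨x₀⟩ : Nonempty X := by
    by_contra! hX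
    exact hμ0 (Measure.eq_zero_of_isEmpty μ)
  let r : ℕ → ℝ := fun n => 1 / ((n : ℝ) + 1)
  have hr : ∀ n, 0 < r n := fun n => Nat.one_div_pos_of_nat
  have hr0 : Tendsto r atTop (nhds 0) := tendsto_one_div_add_atTop_nhds_zero_nat
  set c := liminf (fun n => μ (ball x₀ (r n)) / ν (ball x₀ (r n))) atTop with hc
  have hle : ∀ U, IsOpen U → μ U ≤ c * ν U := fun U hU =>
    hμ.measure_le_liminf_mul hν hν0 x₀ hU hr hr0
  have hge : ∀ U, IsOpen U → ν U ≤ c⁻¹ * μ U := fun U hU => by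
    refine (hν.measure_le_liminf_mul hμ hμ0 x₀ hU hr hr0).trans ?_
    gcongr
    rw [hc, ENNReal.inv_liminf]
    refine (liminf_le_limsup (f := atTop)).trans_eq (congrArg (limsup · atTop) (funext fun n => ?_))
    rw [ENNReal.inv_div (Or.inl (measure_ne_top _ _))
      (Or.inl (hν.measure_ball_pos hν0 x₀ (hr n)).ne')]
  have hc0 : c ≠ 0 := fun h => hμ0 <| Measure.measure_univ_eq_zero.1 <| by
    simpa [h] using hle univ isOpen_univ
  have hct : c ≠ ∞ := fun h => hν0 <| Measure.measure_univ_eq_zero.1 <| by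
    simpa [h] using hge univ isOpen_univ
  have heq : ∀ U, IsOpen U → μ U = (c • ν) U := fun U hU => by
    refine le_antisymm (hle U hU) ?_
    calc c * ν U ≤ c * (c⁻¹ * μ U) := by gcongr; exact hge U hU
      _ = μ U := by rw [← mul_assoc, ENNReal.mul_inv_cancel hc0 hct, one_mul]
  exact ⟨c, hc0, hct, ext_of_generate_finite {s | IsOpen s} BorelSpace.measurable_eq
    isPiSystem_isOpen heq (heq univ isOpen_univ)⟩

end UniformlyDistributed

/-! ### Hausdorff measure on the unit sphere -/

section HausdorffSphere

lemma image_coe_ball_sphere {E : Type*} [NormedAddCommGroup E] (x : sphere (0 : E) 1) (r : ℝ) :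
    ((↑) '' ball x r : Set E) = ball (x : E) r ∩ sphere 0 1 := by
  rw [← Isometry.preimage_ball isometry_subtype_coe, Subtype.image_preimage_coe, inter_comm]

lemma hausdorffMeasure_image_lt_top_of_locallyLipschitz {V X : Type*} [NormedAddCommGroup V]
    [InnerProductSpace ℝ V] [FiniteDimensional ℝ V] [MeasurableSpace V] [BorelSpace V]
    [MetricSpace X] [MeasurableSpace X] [BorelSpace X] {f : V → X} (hf : LocallyLipschitz f)
    {K : Set V} (hK : IsCompact K) : μH[(Module.finrank ℝ V : ℝ)] (f '' K) < ∞ := by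
  refine hK.induction_on (p := fun s => μH[(Module.finrank ℝ V : ℝ)] (f '' s) < ∞) (by simp)
    (fun s t hst ht => (measure_mono (image_mono hst)).trans_lt ht) (fun s t hs ht => ?_)
    fun x _ => ?_
  · rw [image_union]
    exact (measure_union_le _ _).trans_lt (ENNReal.add_lt_top.2 ⟨hs, ht⟩)
  · obtain ⟨C, t, ht, hC⟩ := hf x
    refine ⟨t ∩ ball x 1, mem_nhdsWithin_of_mem_nhds (inter_mem ht (ball_mem_nhds x one_pos)), ?_⟩
    refine ((hC.mono inter_subset_left).hausdorffMeasure_image_le (Nat.cast_nonneg _)).trans_lt ?_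
    exact ENNReal.mul_lt_top (by simp)
      ((measure_mono inter_subset_right).trans_lt measure_ball_lt_top)

variable {E : Type*} [NormedAddCommGroup E] [InnerProductSpace ℝ E]

lemma add_coe_orthogonal_ne_zero {x : E} (hx : x ≠ 0) (v : (ℝ ∙ x)ᗮ) : x + (v : E) ≠ 0 := by
  intro h
  have hinner : ⟪x, x + (v : E)⟫ = ‖x‖ ^ 2 := by
    rw [inner_add_right, real_inner_self_eq_norm_sq,
      Submodule.mem_orthogonal_singleton_iff_inner_right.1 v.2, add_zero]
  rw [h, inner_zero_right] at hinner
  exact hx (norm_eq_zero.1 (pow_eq_zero_iff two_ne_zero |>.1 hinner.symm))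

lemma locallyLipschitz_normalize_add_orthogonal {x : E} (hx : x ≠ 0) :
    LocallyLipschitz fun v : (ℝ ∙ x)ᗮ => ‖x + (v : E)‖⁻¹ • (x + (v : E)) := by
  have hadd : ContDiff ℝ 1 fun v : (ℝ ∙ x)ᗮ => x + (v : E) :=
    contDiff_const.add (ℝ ∙ x)ᗮ.subtypeL.contDiff
  exact (((hadd.norm ℝ (add_coe_orthogonal_ne_zero hx)).inv
    fun v => norm_ne_zero_iff.2 (add_coe_orthogonal_ne_zero hx v)).smul hadd).locallyLipschitz

lemma sphere_inter_subset_image_orthogonal {x : E} (hx : ‖x‖ = 1) :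
    sphere (0 : E) 1 ∩ {y | 1 / 2 < ⟪x, y⟫} ⊆
      (fun v : (ℝ ∙ x)ᗮ => ‖x + (v : E)‖⁻¹ • (x + (v : E))) '' closedBall 0 3 := by
  rintro y ⟨hy, hxy : 1 / 2 < ⟪x, y⟫⟩
  rw [mem_sphere_zero_iff_norm] at hy
  have hpos : 0 < ⟪x, y⟫ := one_half_pos.trans hxy
  have hinv : ‖⟪x, y⟫⁻¹ • y‖ = ⟪x, y⟫⁻¹ := by
    rw [norm_smul, hy, mul_one, Real.norm_of_nonneg (inv_nonneg.2 hpos.le)]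
  refine ⟨⟨⟪x, y⟫⁻¹ • y - x, ?_⟩, ?_, ?_⟩
  · rw [Submodule.mem_orthogonal_singleton_iff_inner_right, inner_sub_right,
      real_inner_smul_right, inv_mul_cancel₀ hpos.ne', real_inner_self_eq_norm_sq, hx, one_pow,
      sub_self]
  · rw [mem_closedBall_zero_iff, Submodule.coe_norm]
    have hle : ⟪x, y⟫⁻¹ ≤ 2 := by
      rw [inv_le_comm₀ hpos two_pos]
      linarith
    exact (norm_sub_le _ _).trans (by rw [hinv, hx]; linarith)
  · simp only [add_sub_cancel, hinv, inv_inv, smul_smul, mul_inv_cancel₀ hpos.ne', one_smul]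

lemma norm_coe_orthogonal_add_smul_sq (x : E) (v : (ℝ ∙ x)ᗮ) (t : ℝ) :
    ‖(v : E) + t • x‖ ^ 2 = ‖v‖ ^ 2 + t ^ 2 * ‖x‖ ^ 2 := by
  rw [norm_add_sq_real, real_inner_smul_right, real_inner_comm,
    Submodule.mem_orthogonal_singleton_iff_inner_right.1 v.2, norm_smul, mul_pow,
    Real.norm_eq_abs, sq_abs, Submodule.coe_norm]
  ring

lemma closedBall_subset_image_orthogonalProjection_sphere {x : E} (hx : ‖x‖ = 1) :
    closedBall (0 : (ℝ ∙ x)ᗮ) 1 ⊆ (ℝ ∙ x)ᗮ.orthogonalProjectionOnto '' sphere (0 : E) 1 := by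
  intro v hv
  rw [mem_closedBall_zero_iff] at hv
  refine ⟨v + √(1 - ‖v‖ ^ 2) • x, ?_, ?_⟩
  · rw [mem_sphere_zero_iff_norm, ← pow_eq_one_iff_of_nonneg (norm_nonneg _) two_ne_zero,
      norm_coe_orthogonal_add_smul_sq, hx, Real.sq_sqrt (by nlinarith [norm_nonneg v])]
    ring
  · rw [map_add, Submodule.orthogonalProjectionOnto_mem_subspace_eq_self, map_smul,
      Submodule.orthogonalProjectionOnto_orthogonalComplement_singleton_eq_zero, smul_zero,
      add_zero]

lemma exists_linearIsometryEquiv_image_ball_inter_sphere {x y : E} (hx : ‖x‖ = 1)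
    (hy : ‖y‖ = 1) (r : ℝ) :
    ∃ e : E ≃ₗᵢ[ℝ] E, e '' (ball x r ∩ sphere 0 1) = ball y r ∩ sphere 0 1 := by
  refine ⟨(ℝ ∙ (x - y))ᗮ.reflection, ?_⟩
  rw [image_inter (LinearIsometryEquiv.injective _), LinearIsometryEquiv.image_ball,
    LinearIsometryEquiv.image_sphere, map_zero, Submodule.reflection_sub (hx.trans hy.symm)]

lemma isUniformlyDistributed_comap_hausdorffMeasure [MeasurableSpace E] [BorelSpace E] (s : ℝ) :
    IsUniformlyDistributed ((μH[s] : Measure E).comap ((↑) : sphere (0 : E) 1 → E)) := by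
  intro x y r
  obtain ⟨e, he⟩ := exists_linearIsometryEquiv_image_ball_inter_sphere
    (norm_eq_of_mem_sphere x) (norm_eq_of_mem_sphere y) r
  rw [comap_subtype_coe_apply isClosed_sphere.measurableSet,
    comap_subtype_coe_apply isClosed_sphere.measurableSet, image_coe_ball_sphere,
    image_coe_ball_sphere, ← he]
  exact (e.toIsometryEquiv.hausdorffMeasure_image _ _).symm

variable [FiniteDimensional ℝ E]

lemma finrank_orthogonal_singleton {x : E} (hx : x ≠ 0) :
    (Module.finrank ℝ (ℝ ∙ x)ᗮ : ℝ) = Module.finrank ℝ E - 1 := by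
  rw [← Submodule.finrank_add_finrank_orthogonal (ℝ ∙ x), finrank_span_singleton hx]
  push_cast
  ring

variable [MeasurableSpace E] [BorelSpace E]

lemma hausdorffMeasure_sphere_lt_top :
    μH[(Module.finrank ℝ E : ℝ) - 1] (sphere (0 : E) 1) < ∞ := by
  refine (isCompact_sphere (0 : E) 1).induction_on
    (p := fun s => μH[(Module.finrank ℝ E : ℝ) - 1] s < ∞) (by simp)
    (fun s t hst ht => (measure_mono hst).trans_lt ht)
    (fun s t hs ht => (measure_union_le _ _).trans_lt (ENNReal.add_lt_top.2 ⟨hs, ht⟩))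
    fun x hx => ?_
  rw [mem_sphere_zero_iff_norm] at hx
  have hx0 : x ≠ 0 := norm_ne_zero_iff.1 (hx ▸ one_ne_zero)
  refine ⟨_, inter_mem_nhdsWithin _ ((isOpen_lt continuous_const
    (continuous_const.inner continuous_id)).mem_nhds ?_),
    (measure_mono (sphere_inter_subset_image_orthogonal hx)).trans_lt ?_⟩
  · rw [mem_ofPred_eq, id_eq, real_inner_self_eq_norm_sq, hx]
    norm_num
  · rw [← finrank_orthogonal_singleton hx0]
    exact hausdorffMeasure_image_lt_top_of_locallyLipschitz
      (locallyLipschitz_normalize_add_orthogonal hx0) (isCompact_closedBall _ _)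

lemma hausdorffMeasure_sphere_pos [Nontrivial E] :
    0 < μH[(Module.finrank ℝ E : ℝ) - 1] (sphere (0 : E) 1) := by
  obtain ⟨x, hx⟩ := exists_norm_eq E zero_le_one
  rw [← finrank_orthogonal_singleton (x := x) (norm_ne_zero_iff.1 (hx ▸ one_ne_zero))]
  calc 0 < μH[(Module.finrank ℝ (ℝ ∙ x)ᗮ : ℝ)] (closedBall (0 : (ℝ ∙ x)ᗮ) 1) :=
        measure_closedBall_pos _ _ one_pos
    _ ≤ μH[(Module.finrank ℝ (ℝ ∙ x)ᗮ : ℝ)]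
          ((ℝ ∙ x)ᗮ.orthogonalProjectionOnto '' sphere (0 : E) 1) :=
        measure_mono (closedBall_subset_image_orthogonalProjection_sphere hx)
    _ ≤ _ := by
        simpa using Submodule.lipschitzWith_orthogonalProjectionOnto (ℝ ∙ x)ᗮ
          |>.hausdorffMeasure_image_le (Nat.cast_nonneg _) (sphere 0 1)

open scoped Pointwise in
lemma isUniformlyDistributed_toSphere :
    IsUniformlyDistributed (volume : Measure E).toSphere := by
  intro x y r
  obtain ⟨e, he⟩ := exists_linearIsometryEquiv_image_ball_inter_sphere
    (norm_eq_of_mem_sphere x) (norm_eq_of_mem_sphere y) r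
  have hcone : Ioo (0 : ℝ) 1 • (e '' (ball (x : E) r ∩ sphere 0 1))
      = e '' (Ioo (0 : ℝ) 1 • (ball (x : E) r ∩ sphere 0 1)) := by
    simp only [← image2_smul, image2_image_right, image_image2, map_smul]
  rw [Measure.toSphere_apply' _ measurableSet_ball, Measure.toSphere_apply' _ measurableSet_ball,
    image_coe_ball_sphere, image_coe_ball_sphere, ← he, hcone, e.image_eq_preimage_symm,
    e.symm.measurePreserving.measure_preimage_emb e.symm.toHomeomorph.measurableEmbedding]

theorem exists_comap_hausdorffMeasure_eq_smul_toSphere [Nontrivial E] :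
    ∃ c : ℝ≥0∞, c ≠ 0 ∧ c ≠ ∞ ∧
      (μH[(Module.finrank ℝ E : ℝ) - 1] : Measure E).comap ((↑) : sphere (0 : E) 1 → E) =
        c • (volume : Measure E).toSphere := by
  have huniv : (μH[(Module.finrank ℝ E : ℝ) - 1] : Measure E).comap
      ((↑) : sphere (0 : E) 1 → E) univ = μH[(Module.finrank ℝ E : ℝ) - 1] (sphere (0 : E) 1) := by
    rw [comap_subtype_coe_apply isClosed_sphere.measurableSet, image_univ, Subtype.range_coe]
  have : IsFiniteMeasure ((μH[(Module.finrank ℝ E : ℝ) - 1] : Measure E).comap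
      ((↑) : sphere (0 : E) 1 → E)) := ⟨huniv ▸ hausdorffMeasure_sphere_lt_top⟩
  refine (isUniformlyDistributed_comap_hausdorffMeasure _).exists_eq_smul
    isUniformlyDistributed_toSphere ?_ (Measure.toSphere_ne_zero _)
  rw [← Measure.measure_univ_ne_zero, huniv]
  exact hausdorffMeasure_sphere_pos.ne'

end HausdorffSphere

/-! ### Polar coordinates -/

section Polar

lemma integral_volumeIoiPow (n : ℕ) (f : ℝ → ℝ) :
    ∫ r : Ioi (0 : ℝ), f r ∂Measure.volumeIoiPow n = ∫ r in Ioi (0 : ℝ), r ^ n * f r := by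
  simp only [Measure.volumeIoiPow, ENNReal.ofReal]
  rw [integral_withDensity_eq_integral_smul (measurable_subtype_coe.pow_const _).real_toNNReal,
    integral_subtype_comap measurableSet_Ioi fun r : ℝ => Real.toNNReal (r ^ n) • f r]
  refine setIntegral_congr_fun measurableSet_Ioi fun r hr => ?_
  rw [NNReal.smul_def, Real.coe_toNNReal _ (pow_nonneg (le_of_lt hr) _), smul_eq_mul]

variable {E : Type*} [NormedAddCommGroup E]

lemma homeomorphUnitSphereProd_snd_smul_fst [NormedSpace ℝ E] (x : ({0}ᶜ : Set E)) :
    (homeomorphUnitSphereProd E x).2.1 • ((homeomorphUnitSphereProd E x).1 : E) = x := by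
  have hx : ‖(x : E)‖ ≠ 0 := norm_ne_zero_iff.2 x.2
  simp [smul_smul, hx]

section NormedSpace

variable [NormedSpace ℝ E] [FiniteDimensional ℝ E] [MeasurableSpace E] [BorelSpace E]
  {μ : Measure E} [μ.IsAddHaarMeasure] {g : E → ℝ}

lemma integrable_toSphere_prod_volumeIoiPow (hg : Integrable g μ) :
    Integrable (fun p : sphere (0 : E) 1 × Ioi (0 : ℝ) => g (p.2.1 • (p.1 : E)))
      (μ.toSphere.prod (.volumeIoiPow (Module.finrank ℝ E - 1))) := by
  rw [← μ.measurePreserving_homeomorphUnitSphereProd.integrable_comp_emb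
    (homeomorphUnitSphereProd E).measurableEmbedding]
  refine ((integrableOn_iff_comap_subtypeVal (measurableSet_singleton _).compl).1
    (hg.integrableOn (s := {0}ᶜ))).congr (ae_of_all _ fun x => ?_)
  exact congrArg g (homeomorphUnitSphereProd_snd_smul_fst x).symm

lemma integrable_integral_toSphere (hg : Integrable g μ) :
    Integrable (fun θ : sphere (0 : E) 1 => ∫ r in Ioi (0 : ℝ),
      r ^ (Module.finrank ℝ E - 1) * g (r • (θ : E))) μ.toSphere :=
  (integrable_toSphere_prod_volumeIoiPow hg).integral_prod_left.congr <|
    ae_of_all _ fun θ => integral_volumeIoiPow _ fun r => g (r • (θ : E))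

lemma integral_eq_integral_toSphere [Nontrivial E] (hg : Integrable g μ) :
    ∫ x, g x ∂μ = ∫ θ : sphere (0 : E) 1, (∫ r in Ioi (0 : ℝ),
      r ^ (Module.finrank ℝ E - 1) * g (r • (θ : E))) ∂μ.toSphere := by
  set n := Module.finrank ℝ E - 1
  calc ∫ x, g x ∂μ = ∫ x : ({(0)}ᶜ : Set E), g x ∂(μ.comap (↑)) := by
        rw [integral_subtype_comap (measurableSet_singleton _).compl g, restrict_compl_singleton]
    _ = ∫ p : sphere (0 : E) 1 × Ioi (0 : ℝ), g (p.2.1 • (p.1 : E))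
          ∂μ.toSphere.prod (.volumeIoiPow n) := by
        rw [← μ.measurePreserving_homeomorphUnitSphereProd.integral_comp
          (homeomorphUnitSphereProd E).measurableEmbedding]
        exact integral_congr_ae
          (ae_of_all _ fun x => congrArg g (homeomorphUnitSphereProd_snd_smul_fst x).symm)
    _ = ∫ θ : sphere (0 : E) 1, ∫ r : Ioi (0 : ℝ), g (r.1 • (θ : E)) ∂(.volumeIoiPow n)
          ∂μ.toSphere := integral_prod _ (integrable_toSphere_prod_volumeIoiPow hg)
    _ = _ := integral_congr_ae
        (ae_of_all _ fun θ => integral_volumeIoiPow n fun r => g (r • (θ : E)))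

end NormedSpace

variable [InnerProductSpace ℝ E] [FiniteDimensional ℝ E] [Nontrivial E] [MeasurableSpace E]
  [BorelSpace E]

variable (E) in
theorem exists_integral_eq_mul_integral_sphere : ∃ c : ℝ, 0 < c ∧ ∀ g : E → ℝ, Integrable g →
    IntegrableOn (fun θ => ∫ r in Ioi (0 : ℝ), r ^ (Module.finrank ℝ E - 1) * g (r • θ))
      (sphere 0 1) μH[(Module.finrank ℝ E : ℝ) - 1] ∧
    ∫ x, g x = c * ∫ θ in sphere (0 : E) 1, (∫ r in Ioi (0 : ℝ),
      r ^ (Module.finrank ℝ E - 1) * g (r • θ)) ∂μH[(Module.finrank ℝ E : ℝ) - 1] := by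
  obtain ⟨c, hc0, hct, hc⟩ := exists_comap_hausdorffMeasure_eq_smul_toSphere (E := E)
  refine ⟨c.toReal⁻¹, inv_pos.2 (ENNReal.toReal_pos hc0 hct), fun g hg => ⟨?_, ?_⟩⟩
  · rw [integrableOn_iff_comap_subtypeVal isClosed_sphere.measurableSet, hc,
      integrable_smul_measure hc0 hct]
    exact integrable_integral_toSphere hg
  · rw [← integral_subtype_comap isClosed_sphere.measurableSet, hc, integral_smul_measure,
      smul_eq_mul, inv_mul_cancel_left₀ (ENNReal.toReal_pos hc0 hct).ne',
      integral_eq_integral_toSphere hg]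

end Polar

/-! ### The kernel of the fractional Laplacian -/

section Kernel

lemma mul_one_add_norm_le_norm_sub_of_le {E : Type*} [NormedAddCommGroup E] {η y : E} {ε : ℝ}
    (hη : ‖η‖ = 1) (hε : 0 ≤ ε) (hy : ε ≤ ‖y - η‖) : ε / (2 + ε) * (1 + ‖y‖) ≤ ‖y - η‖ := by
  have hnorm : ‖y‖ ≤ ‖y - η‖ + 1 := by simpa [hη] using norm_add_le (y - η) η
  rw [div_mul_eq_mul_div, div_le_iff₀ (by linarith)]
  nlinarith

variable {E : Type*} [NormedAddCommGroup E] [InnerProductSpace ℝ E]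

lemma norm_sub_sq_of_unit {η : E} (hη : ‖η‖ = 1) (y : E) :
    ‖y - η‖ ^ 2 = ‖y‖ ^ 2 - 2 * ⟪y, η⟫ + 1 := by
  rw [norm_sub_sq_real, hη, one_pow]

lemma neg_one_le_inner_of_unit {θ η : E} (hθ : ‖θ‖ = 1) (hη : ‖η‖ = 1) : -1 ≤ ⟪θ, η⟫ := by
  simpa [hθ, hη] using neg_le_of_abs_le (abs_real_inner_le_norm θ η)

lemma mul_one_add_norm_le_norm_sub_of_inner_le {η y : E} {t : ℝ} (hη : ‖η‖ = 1) (ht : -1 ≤ t)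
    (hy : ⟪y, η⟫ ≤ ‖y‖ * t) : √((1 - t) / 2) * (1 + ‖y‖) ≤ ‖y - η‖ := by
  rcases le_total 1 t with ht1 | ht1
  · rw [Real.sqrt_eq_zero_of_nonpos (by linarith), zero_mul]
    exact norm_nonneg _
  refine le_of_sq_le_sq ?_ (norm_nonneg _)
  rw [mul_pow, Real.sq_sqrt (by linarith), norm_sub_sq_of_unit hη]
  nlinarith [mul_nonneg (by linarith : 0 ≤ (1 + t) / 2) (sq_nonneg (1 - ‖y‖))]

variable {d : ℕ} {α : ℝ} {η : Ed d}

/-- The kernel `|y - η|^{-d-α}` of the fractional Laplacian at `η`, without the constant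
`A_{d,α}`. -/
noncomputable def fracKernel (d : ℕ) (α : ℝ) (η y : Ed d) : ℝ := ‖y - η‖ ^ (-(d : ℝ) - α)

lemma fracKernel_nonneg (d : ℕ) (α : ℝ) (η y : Ed d) : 0 ≤ fracKernel d α η y :=
  Real.rpow_nonneg (norm_nonneg _) _

lemma measurable_fracKernel (d : ℕ) (α : ℝ) (η : Ed d) : Measurable (fracKernel d α η) :=
  ((measurable_id.sub_const η).norm).pow_const _

lemma fracKernel_le_of_mul_le {c : ℝ} {y : Ed d} (hα : 0 ≤ α) (hc : 0 < c)
    (hy : c * (1 + ‖y‖) ≤ ‖y - η‖) :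
    fracKernel d α η y ≤ c ^ (-(d : ℝ) - α) * (1 + ‖y‖) ^ (-(d : ℝ) - α) := by
  rw [← Real.mul_rpow hc.le (by positivity)]
  exact Real.rpow_le_rpow_of_nonpos (by positivity) hy (by linarith [d.cast_nonneg (α := ℝ)])

lemma fracKernel_smul {θ : Ed d} (hη : ‖η‖ = 1) (hθ : ‖θ‖ = 1) (r : ℝ) :
    fracKernel d α η (r • θ) = (r ^ 2 - 2 * r * ⟪θ, η⟫ + 1) ^ (-((d : ℝ) + α) / 2) := by
  have hsq : r ^ 2 - 2 * r * ⟪θ, η⟫ + 1 = ‖r • θ - η‖ ^ 2 := by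
    rw [norm_sub_sq_of_unit hη, norm_smul, hθ, real_inner_smul_left, mul_one, Real.norm_eq_abs,
      sq_abs, mul_assoc]
  rw [hsq, ← Real.rpow_natCast, ← Real.rpow_mul (norm_nonneg _), fracKernel]
  push_cast
  ring_nf

lemma uKernel_inner {θ : Ed d} (hη : ‖η‖ = 1) (hθ : ‖θ‖ = 1) (s : ℝ) :
    uKernel d α s ⟪θ, η⟫ =
      ∫ r in Ioi (0 : ℝ), r ^ ((d : ℝ) + s - 1) * fracKernel d α η (r • θ) := by
  simp only [uKernel, fracKernel_smul hη hθ]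

lemma integrable_one_add_norm_rpow_mul {s : ℝ} (hs : s < α) :
    Integrable fun y : Ed d => (1 + ‖y‖) ^ s * (1 + ‖y‖) ^ (-(d : ℝ) - α) := by
  refine (integrable_one_add_norm (E := Ed d) (μ := volume) (r := (d : ℝ) + α - s)
    (by rw [finrank_euclideanSpace_fin]; linarith)).congr (ae_of_all _ fun y => ?_)
  beta_reduce
  rw [← Real.rpow_add (by positivity)]
  ring_nf

lemma integrableOn_mul_fracKernel {s C c : ℝ} (hα : 0 ≤ α) (hs : s < α) {F : Ed d → ℝ}
    (hF : Measurable F) (hFb : ∀ y, |F y| ≤ C * (1 + ‖y‖) ^ s) {A : Set (Ed d)}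
    (hA : MeasurableSet A) (hc : 0 < c) (hAc : ∀ y ∈ A, c * (1 + ‖y‖) ≤ ‖y - η‖) :
    IntegrableOn (fun y => F y * fracKernel d α η y) A := by
  refine Integrable.mono' (((integrable_one_add_norm_rpow_mul hs).const_mul
    (C * c ^ (-(d : ℝ) - α))).integrableOn)
    (hF.mul (measurable_fracKernel d α η)).aestronglyMeasurable ?_
  filter_upwards [ae_restrict_mem hA] with y hy
  rw [norm_mul, Real.norm_eq_abs, Real.norm_of_nonneg (fracKernel_nonneg d α η y)]
  calc |F y| * fracKernel d α η y
      ≤ (C * (1 + ‖y‖) ^ s) * (c ^ (-(d : ℝ) - α) * (1 + ‖y‖) ^ (-(d : ℝ) - α)) :=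
        mul_le_mul (hFb y) (fracKernel_le_of_mul_le hα hc (hAc y hy)) (fracKernel_nonneg _ _ _ _)
          ((abs_nonneg _).trans (hFb y))
    _ = C * c ^ (-(d : ℝ) - α) * ((1 + ‖y‖) ^ s * (1 + ‖y‖) ^ (-(d : ℝ) - α)) := by ring

lemma integrableOn_rpow_mul_fracKernel_smul {s : ℝ} (hα : 0 ≤ α) (hs1 : 1 ≤ d + s) (hs : s < α)
    {θ : Ed d} (hη : ‖η‖ = 1) (hθ : ‖θ‖ = 1) (hne : θ ≠ η) :
    IntegrableOn (fun r : ℝ => r ^ ((d : ℝ) + s - 1) * fracKernel d α η (r • θ)) (Ioi 0) := by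
  set c := √((1 - ⟪θ, η⟫) / 2)
  have hc : 0 < c := Real.sqrt_pos.2 (half_pos (sub_pos.2
    ((inner_lt_one_iff_real_of_norm_eq_one hθ hη).2 hne)))
  have hdom : Integrable fun r : ℝ => (1 + ‖r‖) ^ (-(1 + α - s)) :=
    integrable_one_add_norm (by rw [Module.finrank_self, Nat.cast_one]; linarith)
  refine Integrable.mono' (hdom.const_mul (c ^ (-(d : ℝ) - α))).integrableOn
    (Measurable.aestronglyMeasurable ((measurable_id.pow_const _).mul
      ((measurable_fracKernel d α η).comp (measurable_id.smul_const θ)))) ?_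
  filter_upwards [ae_restrict_mem measurableSet_Ioi] with r (hr : 0 < r)
  have hnorm : ‖r • θ‖ = r := by rw [norm_smul, hθ, mul_one, Real.norm_of_nonneg hr.le]
  have hkernel : fracKernel d α η (r • θ) ≤ c ^ (-(d : ℝ) - α) * (1 + r) ^ (-(d : ℝ) - α) := by
    have hle := mul_one_add_norm_le_norm_sub_of_inner_le (y := r • θ) hη
      (neg_one_le_inner_of_unit hθ hη) (by rw [hnorm, real_inner_smul_left])
    simpa only [hnorm] using fracKernel_le_of_mul_le hα hc hle
  rw [norm_mul, Real.norm_of_nonneg (Real.rpow_nonneg hr.le _),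
    Real.norm_of_nonneg (fracKernel_nonneg _ _ _ _), Real.norm_of_nonneg hr.le]
  calc r ^ ((d : ℝ) + s - 1) * fracKernel d α η (r • θ)
      ≤ (1 + r) ^ ((d : ℝ) + s - 1) * (c ^ (-(d : ℝ) - α) * (1 + r) ^ (-(d : ℝ) - α)) :=
        mul_le_mul (Real.rpow_le_rpow hr.le (by linarith) (by linarith)) hkernel
          (fracKernel_nonneg _ _ _ _) (by positivity)
    _ = c ^ (-(d : ℝ) - α) * (1 + r) ^ (-(1 + α - s)) := by
        rw [mul_left_comm, ← Real.rpow_add (by linarith)]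
        ring_nf

lemma fracConst_pos (hα : 0 < α) (hα2 : α < 2) : 0 < fracConst d α := by
  have hnum : 0 < Real.Gamma (((d : ℝ) + α) / 2) := Real.Gamma_pos_of_pos (by positivity)
  have hden : 0 < Real.Gamma (1 - α / 2) := Real.Gamma_pos_of_pos (by linarith)
  exact div_pos (mul_pos (by positivity) hnum) hden

end Kernel

/-! ### Homogeneous extensions -/

section HomogExt

variable {E : Type*} [NormedAddCommGroup E] [NormedSpace ℝ E] {s : ℝ} {φ : E → ℝ}

/-- The extension of a function on the unit sphere that is homogeneous of degree `s`. Its value at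
the origin is `0` when `s ≠ 0`. -/
noncomputable def homogExt (s : ℝ) (φ : E → ℝ) (y : E) : ℝ :=
  ‖y‖ ^ s * φ (‖y‖⁻¹ • y)

lemma norm_inv_smul_mem_sphere {y : E} (hy : y ≠ 0) : ‖y‖⁻¹ • y ∈ sphere (0 : E) 1 := by
  rw [mem_sphere_zero_iff_norm, norm_smul, norm_inv, norm_norm,
    inv_mul_cancel₀ (norm_ne_zero_iff.2 hy)]

lemma homogExt_zero (hs : s ≠ 0) : homogExt s φ 0 = 0 := by
  rw [homogExt, norm_zero, Real.zero_rpow hs, zero_mul]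

lemma homogExt_of_unit {θ : E} (hθ : ‖θ‖ = 1) : homogExt s φ θ = φ θ := by
  rw [homogExt, hθ, Real.one_rpow, one_mul, inv_one, one_smul]

lemma homogExt_smul {r : ℝ} (hr : 0 < r) (y : E) :
    homogExt s φ (r • y) = r ^ s * homogExt s φ y := by
  unfold homogExt
  rw [norm_smul, Real.norm_of_nonneg hr.le, Real.mul_rpow hr.le (norm_nonneg _), mul_assoc,
    mul_inv_rev, mul_smul, inv_smul_smul₀ hr.ne']

variable [ProperSpace E]

lemma exists_abs_homogExt_le (hs : s ≠ 0) (hφ : ContinuousOn φ (sphere 0 1)) :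
    ∃ C, 0 ≤ C ∧ ∀ y, |homogExt s φ y| ≤ C * ‖y‖ ^ s := by
  obtain ⟨C, hC⟩ := (isCompact_sphere (0 : E) 1).exists_bound_of_continuousOn hφ
  refine ⟨max C 0, le_max_right _ _, fun y => ?_⟩
  rcases eq_or_ne y 0 with rfl | hy
  · rw [homogExt_zero hs, norm_zero, Real.zero_rpow hs, abs_zero, mul_zero]
  · rw [homogExt, abs_mul, abs_of_nonneg (Real.rpow_nonneg (norm_nonneg y) s), mul_comm]
    gcongr
    exact (hC _ (norm_inv_smul_mem_sphere hy)).trans (le_max_left _ _)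

lemma continuous_homogExt (hs : 0 < s) (hφ : ContinuousOn φ (sphere 0 1)) :
    Continuous (homogExt s φ) := by
  rw [continuous_iff_continuousAt]
  intro y
  rcases eq_or_ne y 0 with rfl | hy
  · obtain ⟨C, -, hC⟩ := exists_abs_homogExt_le hs.ne' hφ
    rw [ContinuousAt, homogExt_zero hs.ne']
    refine squeeze_zero_norm hC ?_
    have hcont : Continuous fun y : E => C * ‖y‖ ^ s :=
      continuous_const.mul (continuous_norm.rpow_const fun _ => Or.inr hs.le)
    simpa [Real.zero_rpow hs.ne'] using hcont.tendsto 0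
  · have hcont : ContinuousOn (homogExt s φ) {0}ᶜ :=
      (continuous_norm.rpow_const fun _ => Or.inr hs.le).continuousOn.mul <|
        hφ.comp ((continuous_norm.continuousOn.inv₀ fun _ hx => norm_ne_zero_iff.2 hx).smul
          continuousOn_id) fun _ hx => norm_inv_smul_mem_sphere hx
    exact hcont.continuousAt (isOpen_compl_singleton.mem_nhds hy)

lemma homogExt_eq_self [Nontrivial E] (hs : 0 < s) {M : E → ℝ} (hMc : Continuous M)
    (hM : ∀ r : ℝ, 0 < r → ∀ x : E, x ≠ 0 → M (r • x) = r ^ s * M x) : homogExt s M = M := by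
  have : (nhdsWithin (0 : E) {0}ᶜ).NeBot := Module.punctured_nhds_neBot ℝ E 0
  refine (continuous_homogExt hs hMc.continuousOn).ext_on (dense_compl_singleton 0) hMc
    fun y hy => ?_
  rw [homogExt, ← hM _ (norm_pos_iff.2 hy) _ (smul_ne_zero (inv_ne_zero (norm_ne_zero_iff.2 hy))
    hy), smul_inv_smul₀ (norm_ne_zero_iff.2 hy)]

lemma exists_abs_homogExt_le_one_add {t : ℝ} (hs : 0 < s) (hst : s ≤ t)
    (hφ : ContinuousOn φ (sphere 0 1)) : ∃ C, ∀ y, |homogExt s φ y| ≤ C * (1 + ‖y‖) ^ t := by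
  obtain ⟨C, hC0, hC⟩ := exists_abs_homogExt_le hs.ne' hφ
  refine ⟨C, fun y => (hC y).trans (mul_le_mul_of_nonneg_left ?_ hC0)⟩
  calc
    ‖y‖ ^ s ≤ (1 + ‖y‖) ^ s := by gcongr; linarith
    _ ≤ (1 + ‖y‖) ^ t := Real.rpow_le_rpow_of_exponent_le (by linarith [norm_nonneg y]) hst

end HomogExt

lemma exists_abs_sub_le_one_add {E : Type*} [SeminormedAddGroup E] {F : E → ℝ} {s C : ℝ}
    (hs : 0 ≤ s) (hF : ∀ y, |F y| ≤ C * (1 + ‖y‖) ^ s) (a : ℝ) :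
    ∃ C', ∀ y, |F y - a| ≤ C' * (1 + ‖y‖) ^ s := by
  refine ⟨C + |a|, fun y => ?_⟩
  have hone : 1 ≤ (1 + ‖y‖) ^ s := Real.one_le_rpow (by linarith [norm_nonneg y]) hs
  rw [add_mul]
  exact (abs_sub _ _).trans (add_le_add (hF y) (le_mul_of_one_le_right (abs_nonneg a) hone))

lemma exists_abs_sub_const_mul_le {X : Type*} {F G w : X → ℝ}
    (hF : ∃ C, ∀ y, |F y| ≤ C * w y) (hG : ∃ C, ∀ y, |G y| ≤ C * w y) (a : ℝ) :
    ∃ C, ∀ y, |F y - a * G y| ≤ C * w y := by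
  obtain ⟨C₁, hC₁⟩ := hF
  obtain ⟨C₂, hC₂⟩ := hG
  refine ⟨C₁ + |a| * C₂, fun y => ?_⟩
  calc
    |F y - a * G y| ≤ |F y| + |a| * |G y| := by rw [← abs_mul]; exact abs_sub _ _
    _ ≤ C₁ * w y + |a| * (C₂ * w y) := by gcongr; exacts [hC₁ y, hC₂ y]
    _ = (C₁ + |a| * C₂) * w y := by ring

/-! ### Principal values and the spherical operators -/

section ConeCompl

variable {E : Type*} [NormedAddCommGroup E] [InnerProductSpace ℝ E]

/-- The complement of the open circular cone of angle `ε` around the axis `η`, i.e. the points that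
make an angle at least `ε` with `η`, when `η` is a unit vector. -/
def coneCompl (η : E) (ε : ℝ) : Set E := {y | ⟪y, η⟫ ≤ ‖y‖ * Real.cos ε}

lemma isClosed_coneCompl (η : E) (ε : ℝ) : IsClosed (coneCompl η ε) :=
  isClosed_le (by fun_prop) (by fun_prop)

lemma smul_mem_coneCompl_iff {η y : E} {ε r : ℝ} (hr : 0 < r) :
    r • y ∈ coneCompl η ε ↔ y ∈ coneCompl η ε := by
  simp only [coneCompl, mem_ofPred_eq, real_inner_smul_left, norm_smul,
    Real.norm_of_nonneg hr.le, mul_assoc]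
  exact mul_le_mul_iff_right₀ hr

lemma sphere_inter_coneCompl (η : E) (ε : ℝ) :
    sphere (0 : E) 1 ∩ coneCompl η ε = {θ | θ ∈ sphere (0 : E) 1 ∧ ⟪θ, η⟫ ≤ Real.cos ε} := by
  ext θ
  refine and_congr_right fun hθ => ?_
  rw [coneCompl, mem_ofPred_eq, norm_eq_of_mem_sphere ⟨θ, hθ⟩, one_mul]

lemma eventually_mem_coneCompl_of_inner_lt {η y : E} (h : ⟪y, η⟫ < ‖y‖) :
    ∀ᶠ ε in nhdsWithin (0 : ℝ) (Ioi 0), y ∈ coneCompl η ε := by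
  have hcos : Tendsto (fun ε => ‖y‖ * Real.cos ε) (nhdsWithin 0 (Ioi 0)) (nhds ‖y‖) := by
    refine tendsto_nhdsWithin_of_tendsto_nhds (Continuous.tendsto' (by fun_prop) 0 _ ?_)
    rw [Real.cos_zero, mul_one]
  exact (hcos.eventually (lt_mem_nhds h)).mono fun _ => le_of_lt

end ConeCompl

lemma eventually_cos_lt_one : ∀ᶠ ε in nhdsWithin (0 : ℝ) (Ioi 0), Real.cos ε < 1 := by
  filter_upwards [Ioo_mem_nhdsGT Real.pi_pos] with ε hε
  simpa using Real.cos_lt_cos_of_nonneg_of_le_pi le_rfl hε.2.le hε.1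

lemma tendsto_setIntegral_of_ae_eventually_mem {X ι : Type*} [MeasurableSpace X] {μ : Measure X}
    {l : Filter ι} [l.IsCountablyGenerated] {A : ι → Set X} {G : X → ℝ}
    (hA : ∀ i, MeasurableSet (A i)) (hG : Integrable G μ)
    (hmem : ∀ᵐ y ∂μ, ∀ᶠ i in l, y ∈ A i) :
    Tendsto (fun i => ∫ y in A i, G y ∂μ) l (nhds (∫ y, G y ∂μ)) := by
  simp_rw [← integral_indicator (hA _)]
  refine tendsto_integral_filter_of_dominated_convergence (fun y => ‖G y‖)
    (Eventually.of_forall fun i => (hG.indicator (hA i)).aestronglyMeasurable)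
    (Eventually.of_forall fun i => ae_of_all _ fun y => norm_indicator_le_norm_self _ _)
    hG.norm ?_
  filter_upwards [hmem] with y hy
  exact tendsto_const_nhds.congr' (hy.mono fun i hi => (indicator_of_mem hi G).symm)

section PrincipalValue

variable {d : ℕ} {α s ε : ℝ} {φ : Ed d → ℝ} {η : Ed d}

/-- The principal value at `η` of the singular integral `∫ (F y - F η) |y - η|^{-d-α} dy` is `L`
when the sets `A ε`, `ε → 0⁺`, are used to cut out the singularity. Complements of balls give the
fractional Laplacian, complements of cones give the spherical operators. -/
def HasPrincipalValue (d : ℕ) (α : ℝ) (η : Ed d) (A : ℝ → Set (Ed d)) (F : Ed d → ℝ) (L : ℝ) :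
    Prop :=
  Tendsto (fun ε => ∫ y in A ε, (F y - F η) * fracKernel d α η y) (nhdsWithin 0 (Ioi 0)) (nhds L)

lemma fracLapAt.hasPrincipalValue {F : Ed d → ℝ} {L : ℝ} (hα : 0 < α) (hα2 : α < 2)
    (h : fracLapAt d α F η L) :
    HasPrincipalValue d α η (fun ε => {y | ε < ‖y - η‖}) F ((fracConst d α)⁻¹ * L) := by
  refine (h.const_mul (fracConst d α)⁻¹).congr fun ε => ?_
  rw [inv_mul_cancel_left₀ (fracConst_pos hα hα2).ne']
  rfl

lemma integrableOn_coneCompl {F : Ed d → ℝ} {C : ℝ} (hα : 0 ≤ α) (hs : s < α) (hη : ‖η‖ = 1)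
    (hε : Real.cos ε < 1) (hF : Measurable F) (hFb : ∀ y, |F y| ≤ C * (1 + ‖y‖) ^ s) :
    IntegrableOn (fun y => F y * fracKernel d α η y) (coneCompl η ε) :=
  integrableOn_mul_fracKernel hα hs hF hFb (isClosed_coneCompl η ε).measurableSet
    (Real.sqrt_pos.2 (by linarith : 0 < (1 - Real.cos ε) / 2)) fun _ =>
      mul_one_add_norm_le_norm_sub_of_inner_le hη (Real.neg_one_le_cos ε)

lemma integral_ray_homogExt_sub_mul_fracKernel (hd : 1 ≤ d) (hα : 0 < α) (hs0 : 0 ≤ s)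
    (hs : s < α) (hη : ‖η‖ = 1) {θ : Ed d} (hθ : ‖θ‖ = 1) (hne : θ ≠ η) (a : ℝ) :
    ∫ r in Ioi (0 : ℝ), r ^ (d - 1) * ((homogExt s φ (r • θ) - a) * fracKernel d α η (r • θ)) =
      φ θ * uKernel d α s ⟪θ, η⟫ - a * uKernel d α 0 ⟪θ, η⟫ := by
  have hd' : (1 : ℝ) ≤ d := by exact_mod_cast hd
  rw [uKernel_inner hη hθ, uKernel_inner hη hθ, ← integral_const_mul, ← integral_const_mul,
    ← integral_sub
      ((integrableOn_rpow_mul_fracKernel_smul hα.le (by linarith) hs hη hθ hne).const_mul _)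
      ((integrableOn_rpow_mul_fracKernel_smul hα.le (by linarith) hα hη hθ hne).const_mul _)]
  refine setIntegral_congr_fun measurableSet_Ioi fun r (hr : 0 < r) => ?_
  have hpow : ∀ t : ℝ, r ^ ((d : ℝ) + t - 1) = r ^ (d - 1) * r ^ t := fun t => by
    rw [← Real.rpow_natCast, ← Real.rpow_add hr, Nat.cast_sub hd, Nat.cast_one]
    ring_nf
  simp only [hpow, Real.rpow_zero, homogExt_smul hr, homogExt_of_unit hθ]
  ring

lemma integral_ray_indicator_coneCompl (hd : 1 ≤ d) (hα : 0 < α) (hs0 : 0 ≤ s) (hs : s < α)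
    (hη : ‖η‖ = 1) {θ : Ed d} (hθ : ‖θ‖ = 1) (hε : Real.cos ε < 1) (a : ℝ) :
    ∫ r in Ioi (0 : ℝ), r ^ (d - 1) * (coneCompl η ε).indicator
      (fun y => (homogExt s φ y - a) * fracKernel d α η y) (r • θ) =
      (coneCompl η ε).indicator
        (fun θ => φ θ * uKernel d α s ⟪θ, η⟫ - a * uKernel d α 0 ⟪θ, η⟫) θ := by
  by_cases hmem : θ ∈ coneCompl η ε
  · have hne : θ ≠ η := by
      rintro rfl
      rw [coneCompl, mem_ofPred_eq, real_inner_self_eq_norm_sq, hη] at hmem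
      linarith
    rw [indicator_of_mem hmem,
      ← integral_ray_homogExt_sub_mul_fracKernel hd hα hs0 hs hη hθ hne]
    refine setIntegral_congr_fun measurableSet_Ioi fun r hr => ?_
    beta_reduce
    rw [indicator_of_mem ((smul_mem_coneCompl_iff hr).2 hmem)]
  · rw [indicator_of_notMem hmem]
    refine (setIntegral_congr_fun measurableSet_Ioi fun r hr => ?_).trans (integral_zero _ _)
    rw [indicator_of_notMem (mt (smul_mem_coneCompl_iff hr).1 hmem), mul_zero]

variable (d) in
lemma exists_setIntegral_coneCompl_homogExt_eq (hd : 1 ≤ d) : ∃ c : ℝ, 0 < c ∧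
    ∀ (α s ε : ℝ) (φ : Ed d → ℝ) (η : Ed d), 0 < α → 0 < s → s < α → Real.cos ε < 1 →
      ContinuousOn φ (sphere 0 1) → ‖η‖ = 1 →
      IntegrableOn (fun θ => φ θ * uKernel d α s ⟪θ, η⟫ - φ η * uKernel d α 0 ⟪θ, η⟫)
        (sphere 0 1 ∩ coneCompl η ε) (sphMeasure d) ∧
      ∫ y in coneCompl η ε, (homogExt s φ y - homogExt s φ η) * fracKernel d α η y =
        c * ∫ θ in sphere 0 1 ∩ coneCompl η ε,
          (φ θ * uKernel d α s ⟪θ, η⟫ - φ η * uKernel d α 0 ⟪θ, η⟫) ∂sphMeasure d := by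
  have : NeZero d := ⟨by omega⟩
  obtain ⟨c, hc, hpolar⟩ := exists_integral_eq_mul_integral_sphere (Ed d)
  refine ⟨c, hc, fun α s ε φ η hα hs0 hs hε hφ hη => ?_⟩
  have hmeas := (isClosed_coneCompl η ε).measurableSet
  obtain ⟨C, hC⟩ := exists_abs_homogExt_le_one_add hs0 le_rfl hφ
  obtain ⟨C', hC'⟩ := exists_abs_sub_le_one_add hs0.le hC (φ η)
  have hint := integrableOn_coneCompl hα.le hs hη hε
    ((continuous_homogExt hs0 hφ).measurable.sub_const (φ η)) hC'
  obtain ⟨hσ, heq⟩ := hpolar _ ((integrable_indicator_iff hmeas).2 hint)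
  rw [finrank_euclideanSpace_fin, ← sphMeasure] at hσ heq
  have hray : EqOn _ _ (sphere (0 : Ed d) 1) := fun θ hθ =>
    integral_ray_indicator_coneCompl (φ := φ) hd hα hs0.le hs hη (mem_sphere_zero_iff_norm.1 hθ)
      hε (φ η)
  constructor
  · rw [inter_comm, IntegrableOn, ← Measure.restrict_restrict hmeas, ← IntegrableOn,
      ← integrable_indicator_iff hmeas]
    exact hσ.congr_fun hray isClosed_sphere.measurableSet
  · rw [homogExt_of_unit hη, ← integral_indicator hmeas, heq,
      setIntegral_congr_fun isClosed_sphere.measurableSet hray, setIntegral_indicator hmeas]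

lemma tendsto_setIntegral_sphere_inter_coneCompl (hd : 2 ≤ d) (hη : ‖η‖ = 1) {G : Ed d → ℝ}
    (hG : IntegrableOn G (sphere 0 1) (sphMeasure d)) :
    Tendsto (fun ε => ∫ θ in sphere 0 1 ∩ coneCompl η ε, G θ ∂sphMeasure d)
      (nhdsWithin 0 (Ioi 0)) (nhds (∫ θ in sphere 0 1, G θ ∂sphMeasure d)) := by
  have hmeas : ∀ ε, MeasurableSet (coneCompl η ε) := fun ε =>
    (isClosed_coneCompl η ε).measurableSet
  have hne : ∀ᵐ θ ∂(sphMeasure d).restrict (sphere 0 1), θ ≠ η := by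
    have hd' : 0 < (d : ℝ) - 1 := sub_pos.2 (by exact_mod_cast hd)
    have := Measure.nullSingletonClass_hausdorff (Ed d) hd'
    exact ae_restrict_of_ae (compl_mem_ae_iff.2 (measure_singleton (μ := μH[(d : ℝ) - 1]) η))
  simp_rw [inter_comm (sphere (0 : Ed d) 1), ← Measure.restrict_restrict (hmeas _)]
  refine tendsto_setIntegral_of_ae_eventually_mem hmeas hG ?_
  filter_upwards [hne, ae_restrict_mem isClosed_sphere.measurableSet] with θ hne hθ
  rw [mem_sphere_zero_iff_norm] at hθ
  refine eventually_mem_coneCompl_of_inner_lt ?_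
  rw [hθ]
  exact (inner_lt_one_iff_real_of_norm_eq_one hθ hη).2 hne

/-- Splitting `φ θ u_s - φ η u_0` as `(φ θ - φ η) u_0 + φ θ (u_s - u_0)` gives the spherical
fractional Laplacian as a limit and the radial operator as a convergent integral. -/
lemma exists_hasPrincipalValue_coneCompl_homogExt {L : ℝ} (hd : 2 ≤ d) (hα : 0 < α) (hα2 : α < 2)
    (hs0 : 0 < s) (hs : s < α) (hφ : ContinuousOn φ (sphere 0 1)) (hη : ‖η‖ = 1)
    (hL : sphFracLapAt d α φ η L)
    (hR : IntegrableOn (RopIntegrand d α s φ η) (sphere 0 1) (sphMeasure d)) :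
    ∃ c, 0 < c ∧
      HasPrincipalValue d α η (coneCompl η) (homogExt s φ) (c * (L + Rop d α s φ η)) := by
  obtain ⟨c, hc, hpolar⟩ := exists_setIntegral_coneCompl_homogExt_eq d (by omega)
  have hA := fracConst_pos (d := d) hα hα2
  refine ⟨c * (fracConst d α)⁻¹, by positivity, ?_⟩
  have hsum := ((hL.const_mul (fracConst d α)⁻¹).add
    (tendsto_setIntegral_sphere_inter_coneCompl hd hη hR)).const_mul c
  have hval : c * ((fracConst d α)⁻¹ * L + ∫ θ in sphere 0 1, RopIntegrand d α s φ η θ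
      ∂sphMeasure d) = c * (fracConst d α)⁻¹ * (L + Rop d α s φ η) := by
    rw [Rop, mul_add, mul_add, mul_assoc, mul_assoc, inv_mul_cancel_left₀ hA.ne', unitSphere]
  refine (hval ▸ hsum).congr' ?_
  filter_upwards [eventually_cos_lt_one] with ε hε
  obtain ⟨hint, heq⟩ := hpolar α s ε φ η hα hs0 hs hε hφ hη
  have hR' := hR.mono_set (inter_subset_left (t := coneCompl η ε))
  have hsplit : ∀ θ, (φ θ - φ η) * uKernel d α 0 ⟪θ, η⟫ =
      (φ θ * uKernel d α s ⟪θ, η⟫ - φ η * uKernel d α 0 ⟪θ, η⟫) - RopIntegrand d α s φ η θ :=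
    fun θ => by rw [RopIntegrand]; ring
  simp_rw [inv_mul_cancel_left₀ hA.ne', heq, unitSphere, ← sphere_inter_coneCompl, hsplit,
    integral_sub hint hR', sub_add_cancel]

end PrincipalValue

/-! ### Singular integrals of functions vanishing to second order -/

lemma isBigO_norm_sub_sq_of_fderiv_eq_zero {E : Type*} [NormedAddCommGroup E] [NormedSpace ℝ E]
    {f : E → ℝ} {x : E} (hf : ContDiffAt ℝ 2 f x) (h0 : f x = 0) (h1 : fderiv ℝ f x = 0) :
    f =O[nhds x] fun y => ‖y - x‖ ^ 2 := by
  obtain ⟨K, t, ht, hK⟩ := (hf.fderiv_right (m := 1) (by norm_num)).exists_lipschitzOnWith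
  have hdiff : ∀ᶠ y in nhds x, DifferentiableAt ℝ f y :=
    (hf.eventually (by simp)).mono fun y hy => hy.differentiableAt (by simp)
  obtain ⟨δ, hδ, hball⟩ := Metric.mem_nhds_iff.1 (inter_mem ht hdiff)
  refine Asymptotics.IsBigO.of_bound K ?_
  filter_upwards [ball_mem_nhds x hδ] with y hy
  have hsub : closedBall x ‖y - x‖ ⊆ ball x δ :=
    closedBall_subset_ball (by rwa [← dist_eq_norm])
  have hderiv : ∀ z ∈ closedBall x ‖y - x‖, ‖fderiv ℝ f z‖ ≤ K * ‖y - x‖ := fun z hz => by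
    have hLip := hK.norm_sub_le (hball (hsub hz)).1 (mem_of_mem_nhds ht)
    rw [h1, sub_zero] at hLip
    rw [mem_closedBall_iff_norm] at hz
    exact hLip.trans (by gcongr)
  have hmv := (convex_closedBall x ‖y - x‖).norm_image_sub_le_of_norm_fderiv_le
    (fun z hz => (hball (hsub hz)).2) hderiv (mem_closedBall_self (norm_nonneg _))
    (mem_closedBall_iff_norm.2 le_rfl)
  rwa [h0, sub_zero, mul_assoc, ← sq, ← Real.norm_of_nonneg (sq_nonneg ‖y - x‖)] at hmv

lemma integrableOn_norm_sub_rpow_ball {E : Type*} [NormedAddCommGroup E] [NormedSpace ℝ E]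
    [FiniteDimensional ℝ E] [Nontrivial E] [MeasurableSpace E] [BorelSpace E] {μ : Measure E}
    [μ.IsAddHaarMeasure] {s : ℝ} (hs : -(Module.finrank ℝ E : ℝ) < s) (x : E) (δ : ℝ) :
    IntegrableOn (fun y => ‖y - x‖ ^ s) (ball x δ) μ := by
  have hzero : IntegrableOn (fun y : E => ‖y‖ ^ s) (ball 0 δ) μ := by
    rw [integrableOn_fun_norm_addHaar μ (f := fun r => r ^ s)]
    have hpow : IntegrableOn (fun r : ℝ => r ^ ((Module.finrank ℝ E : ℝ) - 1 + s)) (Ioo 0 δ) := by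
      rcases le_or_gt δ 0 with hδ | hδ
      · simp [Ioo_eq_empty_of_le hδ]
      · exact (intervalIntegral.integrableOn_Ioo_rpow_iff hδ).2 (by linarith)
    refine hpow.congr_fun (fun r hr => ?_) measurableSet_Ioo
    beta_reduce
    rw [Real.rpow_add hr.1, ← Nat.cast_pred Module.finrank_pos, Real.rpow_natCast, smul_eq_mul]
  have hpre := ((measurePreserving_sub_right μ x).integrableOn_comp_preimage
    (MeasurableEquiv.subRight x).measurableEmbedding).2 hzero
  have hball : (· - x) ⁻¹' ball 0 δ = ball x δ := by
    ext y
    simp [dist_eq_norm]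
  rwa [hball] at hpre

lemma integrable_mul_fracKernel_of_isBigO {d : ℕ} [NeZero d] {α s C : ℝ} (hα : 0 ≤ α)
    (hα2 : α < 2) (hs : s < α) {η : Ed d} (hη : ‖η‖ = 1) {F : Ed d → ℝ} (hF : Measurable F)
    (hFb : ∀ y, |F y| ≤ C * (1 + ‖y‖) ^ s) (hFη : F =O[nhds η] fun y => ‖y - η‖ ^ 2) :
    Integrable fun y => F y * fracKernel d α η y := by
  obtain ⟨C', hC'⟩ := hFη.bound
  obtain ⟨δ, hδ, hball⟩ := Metric.eventually_nhds_iff_ball.1 hC'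
  rw [← integrableOn_univ, ← union_compl_self (ball η δ)]
  refine IntegrableOn.union ?_ (integrableOn_mul_fracKernel (c := δ / (2 + δ)) hα hs hF hFb
    measurableSet_ball.compl (by positivity) fun y hy =>
      mul_one_add_norm_le_norm_sub_of_le hη hδ.le ?_)
  · have hint := (integrableOn_norm_sub_rpow_ball (μ := volume) (s := 2 - d - α)
      (by rw [finrank_euclideanSpace_fin]; linarith) η δ).const_mul C'
    refine Integrable.mono' hint (hF.mul (measurable_fracKernel d α η)).aestronglyMeasurable ?_
    filter_upwards [ae_restrict_mem measurableSet_ball, ae_restrict_of_ae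
      (compl_mem_ae_iff.2 (measure_singleton (μ := volume) η))] with y hy hne
    have hpos : 0 < ‖y - η‖ := norm_pos_iff.2 (sub_ne_zero.2 hne)
    calc ‖F y * fracKernel d α η y‖ = ‖F y‖ * fracKernel d α η y := by
          rw [norm_mul, Real.norm_of_nonneg (fracKernel_nonneg d α η y)]
      _ ≤ C' * ‖y - η‖ ^ 2 * fracKernel d α η y := by
          refine mul_le_mul_of_nonneg_right ?_ (fracKernel_nonneg d α η y)
          simpa only [norm_pow, norm_norm] using hball y hy
      _ = C' * ‖y - η‖ ^ (2 - d - α) := by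
          rw [fracKernel, mul_assoc, ← Real.rpow_natCast, ← Real.rpow_add hpos]
          push_cast
          ring_nf
  · simpa [dist_eq_norm] using hy

/-! ### Odd integrands -/

section Annulus

variable {E : Type*} [NormedAddCommGroup E]

/-- A neighbourhood of the unit sphere that is invariant under rotations and under the inversion in
the unit sphere. -/
def annulus (E : Type*) [NormedAddCommGroup E] : Set E := {y | ‖y‖ ∈ Icc 2⁻¹ 2}

lemma ne_zero_of_mem_annulus {y : E} (hy : y ∈ annulus E) : y ≠ 0 :=
  norm_pos_iff.1 ((by norm_num : (0 : ℝ) < 2⁻¹).trans_le hy.1)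

variable (E) in
lemma isClosed_annulus : IsClosed (annulus E) := isClosed_Icc.preimage continuous_norm

variable (E) in
lemma isCompact_annulus [ProperSpace E] : IsCompact (annulus E) :=
  (isCompact_closedBall 0 2).of_isClosed_subset (isClosed_annulus E) fun _ hy =>
    mem_closedBall_zero_iff.2 hy.2

lemma annulus_mem_nhds {η : E} (hη : ‖η‖ = 1) : annulus E ∈ nhds η :=
  continuous_norm.continuousAt.preimage_mem_nhds <| by
    rw [hη]
    exact Icc_mem_nhds (by norm_num) (by norm_num)

lemma continuousOn_norm_rpow_annulus (a : ℝ) : ContinuousOn (fun y : E => ‖y‖ ^ a) (annulus E) :=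
  continuous_norm.continuousOn.rpow_const fun _ hy =>
    Or.inl (norm_ne_zero_iff.2 (ne_zero_of_mem_annulus hy))

end Annulus

section Inversion

variable {E : Type*} [NormedAddCommGroup E] [InnerProductSpace ℝ E]

lemma norm_inversion_zero_one (y : E) : ‖EuclideanGeometry.inversion 0 1 y‖ = ‖y‖⁻¹ := by
  simpa using EuclideanGeometry.dist_inversion_center (0 : E) y 1

lemma norm_inversion_zero_one_sub {η y : E} (hη : ‖η‖ = 1) (hy : y ≠ 0) :
    ‖EuclideanGeometry.inversion 0 1 y - η‖ = ‖y - η‖ / ‖y‖ := by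
  have hη0 : η ≠ 0 := norm_ne_zero_iff.1 (by rw [hη]; exact one_ne_zero)
  have hdist := EuclideanGeometry.dist_inversion_inversion hy hη0 1
  rw [EuclideanGeometry.inversion_of_mem_sphere (x := η) (by simpa using hη)] at hdist
  simpa [hη, dist_eq_norm, div_eq_inv_mul] using hdist

lemma inversion_mem_annulus {y : E} (hy : y ∈ annulus E) :
    EuclideanGeometry.inversion 0 1 y ∈ annulus E := by
  have hpos := norm_pos_iff.2 (ne_zero_of_mem_annulus hy)
  rw [annulus, mem_ofPred_eq, norm_inversion_zero_one]
  exact ⟨inv_anti₀ hpos hy.2, inv_le_of_inv_le₀ two_pos hy.1⟩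

lemma inversion_mem_coneCompl {η y : E} {ε : ℝ} (hy : y ∈ coneCompl η ε) :
    EuclideanGeometry.inversion 0 1 y ∈ coneCompl η ε := by
  rcases eq_or_ne y 0 with rfl | hy0
  · rwa [EuclideanGeometry.inversion_self]
  have hinv : EuclideanGeometry.inversion 0 1 y = (‖y‖⁻¹ ^ 2) • y := by
    simp [EuclideanGeometry.inversion]
  rw [hinv]
  exact (smul_mem_coneCompl_iff (by positivity)).2 hy

lemma abs_det_fderiv_inversion [FiniteDimensional ℝ E] {y : E} (hy : y ≠ 0) :
    |(fderiv ℝ (EuclideanGeometry.inversion (0 : E) 1) y).det| =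
      ‖y‖⁻¹ ^ (2 * Module.finrank ℝ E) := by
  rw [(EuclideanGeometry.hasFDerivAt_inversion hy).fderiv, ContinuousLinearMap.det,
    ContinuousLinearMap.toLinearMap_smul, LinearMap.det_smul, abs_mul]
  have hrefl : |LinearMap.det ((ℝ ∙ (y - 0))ᗮ.reflection : E →L[ℝ] E).toLinearMap| = 1 :=
    (congrArg abs (Submodule.det_reflection (ℝ ∙ (y - 0))ᗮ)).trans (by simp)
  rw [hrefl, mul_one, dist_zero_right, one_div, ← pow_mul, abs_of_nonneg (by positivity)]

end Inversion

lemma reflection_span_singleton_self {E : Type*} [NormedAddCommGroup E] [InnerProductSpace ℝ E]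
    {η : E} : (ℝ ∙ η).reflection η = η :=
  Submodule.reflection_mem_subspace_eq_self (Submodule.mem_span_singleton_self η)

section OddIntegrals

variable {d : ℕ} {α : ℝ} {η : Ed d} {A : Set (Ed d)}

lemma setIntegral_radial_eq_zero (hη : ‖η‖ = 1) (hA : MeasurableSet A) (h0 : 0 ∉ A)
    (hinv : MapsTo (EuclideanGeometry.inversion 0 1) A A) :
    ∫ y in A, (‖y‖ ^ (α - d) - 1) * fracKernel d α η y = 0 := by
  have hne : ∀ y ∈ A, y ≠ 0 := fun y hy h => h0 (h ▸ hy)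
  have himage : EuclideanGeometry.inversion 0 1 '' A = A :=
    (image_subset_iff.2 hinv).antisymm fun y hy =>
      ⟨_, hinv hy, EuclideanGeometry.inversion_inversion 0 one_ne_zero y⟩
  have hcov := integral_image_eq_integral_abs_det_fderiv_smul volume hA (fun y hy =>
    (EuclideanGeometry.hasFDerivAt_inversion (R := 1) (hne y hy)).differentiableAt.hasFDerivAt
      |>.hasFDerivWithinAt) (EuclideanGeometry.inversion_injective 0 one_ne_zero).injOn
    fun y => (‖y‖ ^ (α - d) - 1) * fracKernel d α η y
  have hodd : ∀ y ∈ A, |(fderiv ℝ (EuclideanGeometry.inversion (0 : Ed d) 1) y).det| •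
      ((‖EuclideanGeometry.inversion 0 1 y‖ ^ (α - d) - 1) *
        fracKernel d α η (EuclideanGeometry.inversion 0 1 y)) =
      -((‖y‖ ^ (α - d) - 1) * fracKernel d α η y) := fun y hy => by
    have hpos : 0 < ‖y‖ := norm_pos_iff.2 (hne y hy)
    have hpow : ‖y‖⁻¹ ^ (2 * d) = ‖y‖ ^ (α - d) * ‖y‖ ^ (-(d : ℝ) - α) := by
      rw [← Real.rpow_add hpos, inv_pow, ← Real.rpow_natCast, ← Real.rpow_neg hpos.le]
      push_cast
      ring_nf
    have hα := (Real.rpow_pos_of_pos hpos (α - d)).ne'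
    have hd := (Real.rpow_pos_of_pos hpos (-(d : ℝ) - α)).ne'
    rw [abs_det_fderiv_inversion (hne y hy), finrank_euclideanSpace_fin, fracKernel, fracKernel,
      norm_inversion_zero_one_sub hη (hne y hy), norm_inversion_zero_one, smul_eq_mul,
      Real.div_rpow (norm_nonneg _) hpos.le, Real.inv_rpow hpos.le, hpow]
    field_simp
    ring
  rw [himage, setIntegral_congr_fun hA hodd, integral_neg] at hcov
  exact self_eq_neg.1 hcov

lemma setIntegral_inner_mul_fracKernel_eq_zero {w : Ed d} (hw : ⟪w, η⟫ = 0)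
    (hA : MapsTo (ℝ ∙ η).reflection A A) : ∫ y in A, ⟪w, y⟫ * fracKernel d α η y = 0 := by
  set R := (ℝ ∙ η).reflection
  have hpre : R ⁻¹' A = A :=
    Subset.antisymm (fun y hy => by simpa [R] using hA hy) hA
  have hodd : ∀ y, ⟪w, R y⟫ * fracKernel d α η (R y) = -(⟪w, y⟫ * fracKernel d α η y) := by
    intro y
    have hnorm : ‖R y - η‖ = ‖y - η‖ := by
      conv_lhs => rw [← reflection_span_singleton_self (η := η), ← map_sub, R.norm_map]
    have hinner : ⟪w, R y⟫ = -⟪w, y⟫ := by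
      simp only [R]
      rw [Submodule.reflection_singleton_apply, inner_sub_right, two_smul, inner_add_right,
        inner_smul_right, hw, mul_zero, add_zero, zero_sub]
    rw [fracKernel, fracKernel, hnorm, hinner, neg_mul]
  have hcov := R.measurePreserving.setIntegral_preimage_emb
    R.toHomeomorph.measurableEmbedding (fun y => ⟪w, y⟫ * fracKernel d α η y) A
  simp_rw [hpre, hodd, integral_neg] at hcov
  exact neg_eq_self.1 hcov

lemma integrableOn_inter_annulus_mul_fracKernel {c : ℝ} (hα : 0 ≤ α) (hA : MeasurableSet A)
    (hc : 0 < c) (hAc : ∀ y ∈ A, c * (1 + ‖y‖) ≤ ‖y - η‖) {u : Ed d → ℝ}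
    (hu : ContinuousOn u (annulus (Ed d))) :
    IntegrableOn (fun y => u y * fracKernel d α η y) (A ∩ annulus (Ed d)) := by
  refine Integrable.mul_bdd (c := c ^ (-(d : ℝ) - α))
    ((hu.integrableOn_compact (isCompact_annulus _)).mono_set inter_subset_right)
    (measurable_fracKernel d α η).aestronglyMeasurable ?_
  filter_upwards [ae_restrict_mem (hA.inter (isClosed_annulus _).measurableSet)] with y hy
  rw [Real.norm_of_nonneg (fracKernel_nonneg d α η y)]
  have hexp : -(d : ℝ) - α ≤ 0 := by linarith [d.cast_nonneg (α := ℝ)]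
  exact (fracKernel_le_of_mul_le hα hc (hAc y hy.1)).trans <| mul_le_of_le_one_right
    (by positivity) (Real.rpow_le_one_of_one_le_of_nonpos (by linarith [norm_nonneg y]) hexp)

end OddIntegrals

/-! ### Ball and cone principal values agree -/

section SymmetricExcision

variable {d : ℕ} {α : ℝ} {η : Ed d}

/-- A family of sets `A ε` that cuts out the singularity at `η` in such a way that the linear part
of a function does not contribute to the principal value at `η`. Its tangential part cancels by the
reflection in the line `ℝ η`, and its radial part by the last field, since it is a multiple of the
linear part of `|y|^{α-d}`. -/
structure IsSymmetricExcision (d : ℕ) (α : ℝ) (η : Ed d) (A : ℝ → Set (Ed d)) : Prop where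
  measurableSet : ∀ ε, MeasurableSet (A ε)
  ae_eventually_mem : ∀ᵐ y, ∀ᶠ ε in nhdsWithin (0 : ℝ) (Ioi 0), y ∈ A ε
  eventually_mul_le : ∀ᶠ ε in nhdsWithin (0 : ℝ) (Ioi 0),
    ∃ c > 0, ∀ y ∈ A ε, c * (1 + ‖y‖) ≤ ‖y - η‖
  mapsTo_reflection : ∀ ε, MapsTo (ℝ ∙ η).reflection (A ε) (A ε)
  tendsto_radial : Tendsto (fun ε => ∫ y in A ε ∩ annulus (Ed d),
    (‖y‖ ^ (α - d) - 1) * fracKernel d α η y) (nhdsWithin 0 (Ioi 0)) (nhds 0)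

lemma ae_inner_lt_norm (hd : 2 ≤ d) (hη : ‖η‖ = 1) : ∀ᵐ y : Ed d, ⟪y, η⟫ < ‖y‖ := by
  have hne : (ℝ ∙ η) ≠ ⊤ := fun htop => by
    have hrank := finrank_span_singleton (K := ℝ) (norm_ne_zero_iff.1 (hη ▸ one_ne_zero))
    rw [htop, finrank_top, finrank_euclideanSpace_fin] at hrank
    omega
  filter_upwards [compl_mem_ae_iff.2 (Measure.addHaar_submodule volume _ hne)] with y hy
  rw [← mul_one ‖y‖, ← hη]
  refine inner_lt_norm_mul_iff_real.2 fun h => hy ?_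
  rw [hη, one_smul] at h
  exact h ▸ Submodule.smul_mem _ _ (Submodule.mem_span_singleton_self η)

lemma isSymmetricExcision_coneCompl (hd : 2 ≤ d) (hη : ‖η‖ = 1) :
    IsSymmetricExcision d α η (coneCompl η) where
  measurableSet ε := (isClosed_coneCompl η ε).measurableSet
  ae_eventually_mem :=
    (ae_inner_lt_norm hd hη).mono fun _ => eventually_mem_coneCompl_of_inner_lt
  eventually_mul_le := by
    filter_upwards [eventually_cos_lt_one] with ε hε
    exact ⟨_, Real.sqrt_pos.2 (by linarith : 0 < (1 - Real.cos ε) / 2), fun _ =>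
      mul_one_add_norm_le_norm_sub_of_inner_le hη (Real.neg_one_le_cos ε)⟩
  mapsTo_reflection ε y hy := by
    have hinner := (ℝ ∙ η).reflection.inner_map_map y η
    rw [reflection_span_singleton_self] at hinner
    rwa [coneCompl, mem_ofPred_eq, hinner, LinearIsometryEquiv.norm_map]
  tendsto_radial := by
    refine tendsto_const_nhds.congr fun ε => (setIntegral_radial_eq_zero hη
      ((isClosed_coneCompl η ε).inter (isClosed_annulus _)).measurableSet
      (fun h => ne_zero_of_mem_annulus h.2 rfl) ?_).symm
    exact fun y hy => ⟨inversion_mem_coneCompl hy.1, inversion_mem_annulus hy.2⟩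

lemma hasFDerivAt_norm_rpow_of_unit {E : Type*} [NormedAddCommGroup E] [InnerProductSpace ℝ E]
    (a : ℝ) {η : E} (hη : ‖η‖ = 1) :
    HasFDerivAt (fun y : E => ‖y‖ ^ a) (a • innerSL ℝ η) η := by
  have hsq := (hasStrictFDerivAt_norm_sq η).hasFDerivAt.rpow_const (p := a / 2)
    (Or.inl (by rw [hη]; norm_num))
  convert! hsq using 1
  · ext1 y
    rw [← Real.rpow_natCast, ← Real.rpow_mul (norm_nonneg y)]
    push_cast
    ring_nf
  · ext z
    simp [hη]
    ring

lemma isBigO_norm_rpow_sub_one {E : Type*} [NormedAddCommGroup E] [InnerProductSpace ℝ E]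
    (a : ℝ) {η : E} (hη : ‖η‖ = 1) :
    (fun y : E => ‖y‖ ^ a - 1) =O[nhds η] fun y => ‖y - η‖ := by
  have hO := (hasFDerivAt_norm_rpow_of_unit a hη).isBigO_sub.norm_right
  rwa [hη, Real.one_rpow] at hO

lemma exists_measureReal_shell_le (E : Type*) [NormedAddCommGroup E] [NormedSpace ℝ E]
    [FiniteDimensional ℝ E] [MeasurableSpace E] [BorelSpace E] (μ : Measure E)
    [μ.IsAddHaarMeasure] : ∃ C, ∀ (x : E) (ε : ℝ), 0 < ε → ε ≤ 1 →
      μ.real (closedBall x (ε * (1 + 2 * ε)) \ closedBall x ε) ≤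
        C * ε ^ (Module.finrank ℝ E + 1) := by
  set n := Module.finrank ℝ E
  refine ⟨2 * n * 3 ^ (n - 1) * μ.real (ball 0 1), fun x ε hε hε1 => ?_⟩
  have hpow : (1 + 2 * ε) ^ n - 1 ≤ 2 * n * 3 ^ (n - 1) * ε := by
    have h := (le_abs_self _).trans (abs_pow_sub_pow_le (1 + 2 * ε) 1 n)
    rw [one_pow, add_sub_cancel_left, abs_one, abs_of_nonneg (by positivity : 0 ≤ 2 * ε),
      abs_of_nonneg (by positivity : 0 ≤ 1 + 2 * ε), max_eq_left (by linarith)] at h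
    refine h.trans ?_
    calc 2 * ε * n * (1 + 2 * ε) ^ (n - 1) ≤ 2 * ε * n * 3 ^ (n - 1) := by gcongr; linarith
      _ = 2 * n * 3 ^ (n - 1) * ε := by ring
  rw [measureReal_sdiff (closedBall_subset_closedBall (by nlinarith))
    isClosed_closedBall.measurableSet measure_closedBall_lt_top.ne,
    Measure.addHaar_real_closedBall _ _ (by positivity), Measure.addHaar_real_closedBall _ _ hε.le]
  calc (ε * (1 + 2 * ε)) ^ n * μ.real (ball 0 1) - ε ^ n * μ.real (ball 0 1)
      = ε ^ n * ((1 + 2 * ε) ^ n - 1) * μ.real (ball 0 1) := by rw [mul_pow]; ring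
    _ ≤ ε ^ n * (2 * n * 3 ^ (n - 1) * ε) * μ.real (ball 0 1) := by gcongr
    _ = 2 * n * 3 ^ (n - 1) * μ.real (ball 0 1) * ε ^ (n + 1) := by ring

lemma exists_setIntegral_shell_le (hη : ‖η‖ = 1) (hα : 0 ≤ α) :
    ∃ C, ∀ᶠ ε in nhdsWithin (0 : ℝ) (Ioi 0),
      ‖∫ y in {y | ε < ‖y - η‖ ∧ ‖y - η‖ ≤ ε * ‖y‖} ∩ annulus (Ed d),
        (‖y‖ ^ (α - d) - 1) * fracKernel d α η y‖ ≤ C * ε ^ (2 - α) := by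
  obtain ⟨C₁, hC₁, hlin⟩ := (isBigO_norm_rpow_sub_one (α - d) hη).exists_nonneg
  obtain ⟨δ, hδ, hball⟩ := Metric.eventually_nhds_iff_ball.1 hlin.bound
  obtain ⟨C₂, hvol⟩ := exists_measureReal_shell_le (Ed d) volume
  refine ⟨C₁ * 2 * C₂, ?_⟩
  filter_upwards [Ioo_mem_nhdsGT (show 0 < min (δ / 2) 1 by positivity)] with ε ⟨hε, hεδ⟩
  rw [lt_min_iff] at hεδ
  set S := {y | ε < ‖y - η‖ ∧ ‖y - η‖ ≤ ε * ‖y‖} ∩ annulus (Ed d)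
  have hdist : ∀ y ∈ S, ‖y - η‖ ≤ 2 * ε := fun y hy => by nlinarith [hy.1.2, hy.2.2]
  have hsub : S ⊆ closedBall η (ε * (1 + 2 * ε)) \ closedBall η ε := fun y hy => by
    have hnorm : ‖y‖ ≤ ‖y - η‖ + 1 := by simpa [hη] using norm_add_le (y - η) η
    rw [Set.mem_sdiff, mem_closedBall_iff_norm, mem_closedBall_iff_norm, not_le]
    exact ⟨by nlinarith [hdist y hy, hy.1.2], hy.1.1⟩
  have hfin : volume (closedBall η (ε * (1 + 2 * ε)) \ closedBall η ε) ≠ ∞ :=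
    measure_ne_top_of_subset sdiff_subset measure_closedBall_lt_top.ne
  have hbound : ∀ y ∈ S, ‖(‖y‖ ^ (α - d) - 1) * fracKernel d α η y‖ ≤
      C₁ * (2 * ε) * ε ^ (-(d : ℝ) - α) := fun y hy => by
    have hlin := hball y (mem_ball_iff_norm.2 ((hdist y hy).trans_lt (by linarith)))
    rw [norm_norm] at hlin
    rw [norm_mul, Real.norm_of_nonneg (fracKernel_nonneg d α η y)]
    refine mul_le_mul (hlin.trans (mul_le_mul_of_nonneg_left (hdist y hy) hC₁)) ?_
      (fracKernel_nonneg d α η y) (by positivity)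
    exact Real.rpow_le_rpow_of_nonpos hε hy.1.1.le (by linarith [d.cast_nonneg (α := ℝ)])
  calc _ ≤ C₁ * (2 * ε) * ε ^ (-(d : ℝ) - α) * volume.real S :=
        norm_setIntegral_le_of_norm_le_const (measure_ne_top_of_subset hsub hfin).lt_top hbound
    _ ≤ C₁ * (2 * ε) * ε ^ (-(d : ℝ) - α) * (C₂ * ε ^ (d + 1)) := by
        gcongr
        simpa using (measureReal_mono hsub hfin).trans (hvol η ε hε hεδ.2.le)
    _ = C₁ * 2 * C₂ * (ε ^ (1 : ℝ) * ε ^ (-(d : ℝ) - α) * ε ^ ((d + 1 : ℕ) : ℝ)) := by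
        rw [Real.rpow_natCast, Real.rpow_one]
        ring
    _ = C₁ * 2 * C₂ * ε ^ (2 - α) := by
        rw [← Real.rpow_add hε, ← Real.rpow_add hε]
        push_cast
        ring_nf

lemma tendsto_setIntegral_radial_lt_norm_sub (hα : 0 ≤ α) (hα2 : α < 2) (hη : ‖η‖ = 1) :
    Tendsto (fun ε => ∫ y in {y | ε < ‖y - η‖} ∩ annulus (Ed d),
      (‖y‖ ^ (α - d) - 1) * fracKernel d α η y) (nhdsWithin 0 (Ioi 0)) (nhds 0) := by
  obtain ⟨C, hC⟩ := exists_setIntegral_shell_le (d := d) hη hα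
  have hzero : Tendsto (fun ε : ℝ => C * ε ^ (2 - α)) (nhdsWithin 0 (Ioi 0)) (nhds 0) := by
    have hrpow := Real.continuousAt_rpow_const 0 (2 - α) (Or.inr (by linarith))
    rw [ContinuousAt, Real.zero_rpow (by linarith)] at hrpow
    simpa using (tendsto_nhdsWithin_of_tendsto_nhds hrpow).const_mul C
  refine squeeze_zero_norm' ?_ hzero
  filter_upwards [hC, self_mem_nhdsWithin] with ε hε (hε0 : 0 < ε)
  set D := {y | ε < ‖y - η‖} ∩ annulus (Ed d)
  set T := {y : Ed d | ε * ‖y‖ < ‖y - η‖}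
  have hT : MeasurableSet T := measurableSet_lt (by fun_prop) (by fun_prop)
  have hD : MeasurableSet {y : Ed d | ε < ‖y - η‖} :=
    measurableSet_lt measurable_const (by fun_prop)
  have hint : IntegrableOn (fun y => (‖y‖ ^ (α - d) - 1) * fracKernel d α η y) D :=
    integrableOn_inter_annulus_mul_fracKernel hα hD (c := ε / (2 + ε)) (by positivity)
      (fun _ hy => mul_one_add_norm_le_norm_sub_of_le hη hε0.le (le_of_lt hy))
      ((continuousOn_norm_rpow_annulus _).sub continuousOn_const)
  have hodd : ∫ y in D ∩ T, (‖y‖ ^ (α - d) - 1) * fracKernel d α η y = 0 := by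
    refine setIntegral_radial_eq_zero hη ((hD.inter (isClosed_annulus _).measurableSet).inter hT)
      (fun h => ne_zero_of_mem_annulus h.1.2 rfl) fun y hy => ?_
    have hy0 := ne_zero_of_mem_annulus hy.1.2
    have hpos := norm_pos_iff.2 hy0
    refine ⟨⟨?_, inversion_mem_annulus hy.1.2⟩, ?_⟩
    · rw [mem_ofPred_eq, norm_inversion_zero_one_sub hη hy0, lt_div_iff₀ hpos]
      exact hy.2
    · rw [mem_ofPred_eq, norm_inversion_zero_one_sub hη hy0, norm_inversion_zero_one,
        ← div_eq_mul_inv, div_lt_div_iff_of_pos_right hpos]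
      exact hy.1.1
  have hshell : D \ T = {y | ε < ‖y - η‖ ∧ ‖y - η‖ ≤ ε * ‖y‖} ∩ annulus (Ed d) := by
    ext y
    simp only [D, T, Set.mem_sdiff, mem_inter_iff, mem_ofPred_eq, not_lt]
    tauto
  rwa [← integral_inter_add_sdiff hT hint, hodd, zero_add, hshell]

lemma isSymmetricExcision_lt_norm_sub [NeZero d] (hα : 0 ≤ α) (hα2 : α < 2) (hη : ‖η‖ = 1) :
    IsSymmetricExcision d α η fun ε => {y | ε < ‖y - η‖} where
  measurableSet ε := measurableSet_lt measurable_const (by fun_prop)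
  ae_eventually_mem := by
    filter_upwards [compl_mem_ae_iff.2 (measure_singleton (μ := volume) η)] with y hy
    exact eventually_nhdsWithin_of_eventually_nhds
      (eventually_lt_nhds (norm_pos_iff.2 (sub_ne_zero.2 hy)))
  eventually_mul_le := by
    filter_upwards [self_mem_nhdsWithin] with ε (hε : 0 < ε)
    exact ⟨ε / (2 + ε), by positivity, fun _ hy =>
      mul_one_add_norm_le_norm_sub_of_le hη hε.le (le_of_lt hy)⟩
  mapsTo_reflection ε y hy := by
    have hnorm := (ℝ ∙ η).reflection.norm_map (y - η)
    rw [map_sub, reflection_span_singleton_self] at hnorm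
    rwa [mem_ofPred_eq, hnorm]
  tendsto_radial := tendsto_setIntegral_radial_lt_norm_sub hα hα2 hη

lemma exists_jet_decomposition (hα : α ≠ d) (hη : ‖η‖ = 1) {f : Ed d → ℝ}
    (hf : ContDiffAt ℝ 2 f η) : ∃ (c : ℝ) (w : Ed d), ⟪w, η⟫ = 0 ∧
      (fun y => f y - f η - (c * (‖y‖ ^ (α - d) - 1) + ⟪w, y⟫)) =O[nhds η]
        fun y => ‖y - η‖ ^ 2 := by
  have hη0 : η ≠ 0 := norm_ne_zero_iff.1 (hη ▸ one_ne_zero)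
  set v := (InnerProductSpace.toDual ℝ (Ed d)).symm (fderiv ℝ f η)
  have hv : ∀ z, fderiv ℝ f η z = ⟪v, z⟫ := fun z => by simp [v]
  have hw : ⟪v - ⟪v, η⟫ • η, η⟫ = 0 := by
    rw [inner_sub_left, real_inner_smul_left, real_inner_self_eq_norm_sq, hη]
    ring
  refine ⟨⟪v, η⟫ / (α - d), v - ⟪v, η⟫ • η, hw,
    isBigO_norm_sub_sq_of_fderiv_eq_zero ?_ (by simp [hη, hw]) ?_⟩
  · have hnorm : ContDiffAt ℝ 2 (fun y : Ed d => ‖y‖ ^ (α - d)) η :=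
      (contDiffAt_norm ℝ hη0).rpow_const_of_ne (norm_ne_zero_iff.2 hη0)
    exact (hf.sub contDiffAt_const).sub
      ((contDiffAt_const.mul (hnorm.sub contDiffAt_const)).add
        (contDiffAt_const.inner ℝ contDiffAt_id))
  · refine (((hf.differentiableAt (by simp)).hasFDerivAt.sub_const _).sub
      ((((hasFDerivAt_norm_rpow_of_unit (α - d) hη).sub_const 1).const_mul _).add
        (innerSL ℝ (v - ⟪v, η⟫ • η)).hasFDerivAt)).fderiv.trans ?_
    ext z
    simp only [sub_apply, add_apply, hv, smul_apply, innerSL_apply_apply, smul_eq_mul, zero_apply,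
      ← mul_assoc, div_mul_cancel₀ _ (sub_ne_zero.2 hα), inner_sub_left, real_inner_smul_left]
    ring

lemma IsSymmetricExcision.tendsto_setIntegral_jet {A : ℝ → Set (Ed d)}
    (hA : IsSymmetricExcision d α η A) (hα : 0 ≤ α) (c : ℝ) {w : Ed d} (hw : ⟪w, η⟫ = 0) :
    Tendsto (fun ε => ∫ y in A ε ∩ annulus (Ed d),
      (c * (‖y‖ ^ (α - d) - 1) + ⟪w, y⟫) * fracKernel d α η y)
      (nhdsWithin 0 (Ioi 0)) (nhds 0) := by
  have hlim := hA.tendsto_radial.const_mul c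
  rw [mul_zero] at hlim
  refine hlim.congr' ?_
  filter_upwards [hA.eventually_mul_le] with ε ⟨k, hk, hAk⟩
  have hradial := integrableOn_inter_annulus_mul_fracKernel hα (hA.measurableSet ε) hk hAk
    (u := fun y => ‖y‖ ^ (α - d) - 1)
    ((continuousOn_norm_rpow_annulus _).sub continuousOn_const)
  have hinner := integrableOn_inter_annulus_mul_fracKernel hα (hA.measurableSet ε) hk hAk
    (u := fun y => ⟪w, y⟫) (by fun_prop)
  have hodd : ∫ y in A ε ∩ annulus (Ed d), ⟪w, y⟫ * fracKernel d α η y = 0 :=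
    setIntegral_inner_mul_fracKernel_eq_zero hw fun y hy => ⟨hA.mapsTo_reflection ε hy.1, by
      rw [annulus, mem_ofPred_eq, LinearIsometryEquiv.norm_map]
      exact hy.2⟩
  simp only [add_mul, mul_assoc]
  rw [integral_add (hradial.const_mul c) hinner, integral_const_mul, hodd, add_zero]

lemma exists_abs_indicator_annulus_le_one_add {s : ℝ} (hs : 0 ≤ s) {u : Ed d → ℝ}
    (hu : ContinuousOn u (annulus (Ed d))) :
    ∃ C, ∀ y, |(annulus (Ed d)).indicator u y| ≤ C * (1 + ‖y‖) ^ s := by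
  obtain ⟨C, hC⟩ := (isCompact_annulus (Ed d)).exists_bound_of_continuousOn hu
  refine ⟨|C|, fun y => ?_⟩
  have hone : 1 ≤ (1 + ‖y‖) ^ s := Real.one_le_rpow (by linarith [norm_nonneg y]) hs
  refine le_trans ?_ (le_mul_of_one_le_right (abs_nonneg C) hone)
  by_cases hy : y ∈ annulus (Ed d)
  · rw [indicator_of_mem hy]
    exact (hC y hy).trans (le_abs_self C)
  · rw [indicator_of_notMem hy, abs_zero]
    exact abs_nonneg C

lemma exists_hasPrincipalValue_of_contDiffAt [NeZero d] (hα : 0 ≤ α) (hα2 : α < 2) (hαd : α ≠ d)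
    {s C : ℝ} (hs0 : 0 ≤ s) (hs : s < α) (hη : ‖η‖ = 1) {f : Ed d → ℝ} (hfm : Measurable f)
    (hfb : ∀ y, |f y| ≤ C * (1 + ‖y‖) ^ s) (hf : ContDiffAt ℝ 2 f η) :
    ∃ L, ∀ A, IsSymmetricExcision d α η A → HasPrincipalValue d α η A f L := by
  obtain ⟨c, w, hw, hjet⟩ := exists_jet_decomposition hαd hη hf
  set u : Ed d → ℝ := fun y => c * (‖y‖ ^ (α - d) - 1) + ⟪w, y⟫ with hu
  have hum : Measurable u := by fun_prop
  have hucont : ContinuousOn u (annulus (Ed d)) :=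
    (continuousOn_const.mul ((continuousOn_norm_rpow_annulus _).sub continuousOn_const)).add
      (by fun_prop)
  have hannulus := (isClosed_annulus (Ed d)).measurableSet
  set J := (annulus (Ed d)).indicator u
  have hint : Integrable fun y => (f y - f η - J y) * fracKernel d α η y := by
    obtain ⟨C₁, hC₁⟩ := exists_abs_sub_le_one_add hs0 hfb (f η)
    obtain ⟨C₂, hC₂⟩ := exists_abs_indicator_annulus_le_one_add hs0 hucont
    refine integrable_mul_fracKernel_of_isBigO (C := C₁ + C₂) hα hα2 hs hη
      ((hfm.sub_const _).sub (hum.indicator hannulus)) (fun y => ?_) (hjet.congr' ?_ .rfl)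
    · rw [add_mul]
      exact (abs_sub _ _).trans (add_le_add (hC₁ y) (hC₂ y))
    · filter_upwards [annulus_mem_nhds hη] with y hy
      simp only [J, indicator_of_mem hy, hu]
  refine ⟨∫ y, (f y - f η - J y) * fracKernel d α η y, fun A hA => ?_⟩
  have hlim := (tendsto_setIntegral_of_ae_eventually_mem hA.measurableSet hint
    hA.ae_eventually_mem).add (hA.tendsto_setIntegral_jet hα c hw)
  rw [add_zero] at hlim
  refine hlim.congr' ?_
  filter_upwards [hA.eventually_mul_le] with ε ⟨k, hk, hAk⟩
  have hJint := integrableOn_inter_annulus_mul_fracKernel hα (hA.measurableSet ε) hk hAk hucont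
  rw [inter_comm, ← integrableOn_indicator_iff hannulus] at hJint
  rw [← setIntegral_indicator hannulus, ← integral_add hint.integrableOn hJint]
  simp only [indicator_mul_left, J]
  congr! 2 with y
  ring

theorem hasPrincipalValue_coneCompl_of_fracLapAt (hd : 2 ≤ d) (hα : 0 < α) (hα2 : α < 2)
    {s C L : ℝ} (hs0 : 0 ≤ s) (hs : s < α) (hη : ‖η‖ = 1) {f : Ed d → ℝ} (hfm : Measurable f)
    (hfb : ∀ y, |f y| ≤ C * (1 + ‖y‖) ^ s) (hf : ContDiffAt ℝ 2 f η) (hL : fracLapAt d α f η L) :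
    HasPrincipalValue d α η (coneCompl η) f ((fracConst d α)⁻¹ * L) := by
  have : NeZero d := ⟨by omega⟩
  have hαd : α ≠ d := (hα2.trans_le (by exact_mod_cast hd)).ne
  obtain ⟨L', hL'⟩ := exists_hasPrincipalValue_of_contDiffAt hα.le hα2 hαd hs0 hs hη hfm hfb hf
  have heq := tendsto_nhds_unique (hL.hasPrincipalValue hα hα2)
    (hL' _ (isSymmetricExcision_lt_norm_sub hα.le hα2 hη))
  exact heq ▸ hL' _ (isSymmetricExcision_coneCompl hd hη)

end SymmetricExcision

/-! ### Comparison of homogeneity degrees -/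

section Comparison

variable {E : Type*} [NormedAddCommGroup E] [NormedSpace ℝ E] {p q C : ℝ} {φ ψ : E → ℝ}

lemma homogExt_smul_sub_homogExt_smul {r : ℝ} (hr : 0 < r) (y : E) :
    homogExt p φ (r • y) - homogExt q ψ (r • y) =
      r ^ p * (homogExt p φ y - r ^ (q - p) * homogExt q ψ y) := by
  rw [homogExt_smul hr, homogExt_smul hr, mul_sub, ← mul_assoc, ← Real.rpow_add hr,
    add_sub_cancel]

lemma eventually_cocompact_homogExt_sub_nonpos (hpq : p < q) (hψ0 : ∀ θ ∈ sphere (0 : E) 1, 0 ≤ ψ θ)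
    (hφψ : ∀ θ ∈ sphere (0 : E) 1, φ θ ≤ C * ψ θ) [ProperSpace E] :
    ∀ᶠ y in cocompact E, homogExt p φ y - homogExt q ψ y ≤ 0 := by
  have hnorm := tendsto_norm_cocompact_atTop (E := E)
  filter_upwards [hnorm.eventually_gt_atTop 0,
    ((tendsto_rpow_atTop (sub_pos.2 hpq)).comp hnorm).eventually_ge_atTop C] with y hy hC
  have hθ := norm_inv_smul_mem_sphere (norm_pos_iff.1 hy)
  have hscale := homogExt_smul_sub_homogExt_smul (p := p) (q := q) (φ := φ) (ψ := ψ) hy (‖y‖⁻¹ • y)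
  rw [smul_inv_smul₀ hy.ne', homogExt_of_unit (mem_sphere_zero_iff_norm.1 hθ),
    homogExt_of_unit (mem_sphere_zero_iff_norm.1 hθ)] at hscale
  rw [hscale]
  refine mul_nonpos_of_nonneg_of_nonpos (by positivity) (sub_nonpos.2 ((hφψ _ hθ).trans ?_))
  exact mul_le_mul_of_nonneg_right hC (hψ0 _ hθ)

lemma exists_homogExt_sub_pos (hpq : p < q) {θ : E} (hθ : ‖θ‖ = 1) (hφθ : 0 < φ θ) :
    ∃ z, 0 < homogExt p φ z - homogExt q ψ z := by
  have hlim : Tendsto (fun r : ℝ => φ θ - r ^ (q - p) * ψ θ) (nhdsWithin 0 (Ioi 0))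
      (nhds (φ θ)) := by
    have hrpow := Real.continuousAt_rpow_const 0 (q - p) (Or.inr (by linarith))
    rw [ContinuousAt, Real.zero_rpow (by linarith)] at hrpow
    simpa using ((tendsto_nhdsWithin_of_tendsto_nhds hrpow).mul_const (ψ θ)).const_sub (φ θ)
  obtain ⟨r, hpos, hr : 0 < r⟩ :=
    ((hlim.eventually (lt_mem_nhds hφθ)).and self_mem_nhdsWithin).exists
  refine ⟨r • θ, ?_⟩
  rw [homogExt_smul_sub_homogExt_smul hr, homogExt_of_unit hθ, homogExt_of_unit hθ]
  positivity

lemma exists_isMax_homogExt_sub [ProperSpace E] (hp : 0 < p) (hpq : p < q)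
    (hφ : ContinuousOn φ (sphere 0 1)) (hψ : ContinuousOn ψ (sphere 0 1))
    (hψ0 : ∀ θ ∈ sphere (0 : E) 1, 0 ≤ ψ θ) (hφψ : ∀ θ ∈ sphere (0 : E) 1, φ θ ≤ C * ψ θ)
    (hpos : ∃ θ ∈ sphere (0 : E) 1, 0 < φ θ) :
    ∃ a > 0, ∃ η ∈ sphere (0 : E) 1, 0 < homogExt p φ η - a * homogExt q ψ η ∧
      ∀ y, homogExt p φ y - a * homogExt q ψ y ≤ homogExt p φ η - a * homogExt q ψ η := by
  have hq : 0 < q := hp.trans hpq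
  obtain ⟨θ, hθ, hφθ⟩ := hpos
  obtain ⟨z, hz⟩ := exists_homogExt_sub_pos (p := p) (q := q) (ψ := ψ) hpq
    (mem_sphere_zero_iff_norm.1 hθ) hφθ
  obtain ⟨y₀, hmax⟩ :=
    ((continuous_homogExt hp hφ).sub (continuous_homogExt hq hψ)).exists_forall_ge' z
      ((eventually_cocompact_homogExt_sub_nonpos hpq hψ0 hφψ).mono fun _ hy => hy.trans hz.le)
  have hy₀ := hz.trans_le (hmax z)
  have hne : y₀ ≠ 0 := by
    rintro rfl
    simp [homogExt_zero hp.ne', homogExt_zero hq.ne'] at hy₀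
  have hr : 0 < ‖y₀‖ := norm_pos_iff.2 hne
  have hscale := fun y => homogExt_smul_sub_homogExt_smul (p := p) (q := q) (φ := φ) (ψ := ψ) hr y
  refine ⟨‖y₀‖ ^ (q - p), by positivity, ‖y₀‖⁻¹ • y₀, norm_inv_smul_mem_sphere hne, ?_,
    fun y => ?_⟩
  · refine pos_of_mul_pos_right ?_ (Real.rpow_nonneg hr.le p)
    rwa [← hscale, smul_inv_smul₀ hr.ne']
  · refine le_of_mul_le_mul_left ?_ (Real.rpow_pos_of_pos hr p)
    rw [← hscale, ← hscale, smul_inv_smul₀ hr.ne']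
    exact hmax _

end Comparison

section ConeMaximumPrinciple

variable {d : ℕ} {α s C : ℝ} {η : Ed d}

lemma coneCompl_subset_coneCompl {E : Type*} [NormedAddCommGroup E] [InnerProductSpace ℝ E]
    (η : E) {ε ε' : ℝ} (hε : 0 ≤ ε) (hεε' : ε ≤ ε') (hε' : ε' ≤ π) :
    coneCompl η ε' ⊆ coneCompl η ε := fun y hy =>
  le_trans hy (mul_le_mul_of_nonneg_left (Real.cos_le_cos_of_nonneg_of_le_pi hε hε' hεε')
    (norm_nonneg y))

lemma setIntegral_coneCompl_pi_div_two_pos (hη : ‖η‖ = 1) {G : Ed d → ℝ} (hG : Continuous G)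
    (hG0 : ∀ y, 0 ≤ G y) (hG00 : 0 < G 0)
    (hint : IntegrableOn (fun y => G y * fracKernel d α η y) (coneCompl η (π / 2))) :
    0 < ∫ y in coneCompl η (π / 2), G y * fracKernel d α η y := by
  rw [setIntegral_pos_iff_support_of_nonneg_ae
    (ae_of_all _ fun y => mul_nonneg (hG0 y) (fracKernel_nonneg d α η y)) hint]
  have hopen : IsOpen ({y | ⟪y, η⟫ < 0} ∩ {y | 0 < G y}) :=
    (isOpen_lt (by fun_prop) continuous_const).inter (isOpen_lt continuous_const hG)
  have hne : ({y | ⟪y, η⟫ < 0} ∩ {y | 0 < G y}).Nonempty := by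
    have hlim : Tendsto (fun t : ℝ => G (-t • η)) (nhdsWithin 0 (Ioi 0)) (nhds (G 0)) :=
      tendsto_nhdsWithin_of_tendsto_nhds (Continuous.tendsto' (by fun_prop) 0 _ (by simp))
    obtain ⟨t, ht, ht0 : 0 < t⟩ :=
      ((hlim.eventually (lt_mem_nhds hG00)).and self_mem_nhdsWithin).exists
    refine ⟨-t • η, ?_, ht⟩
    rw [mem_ofPred_eq, real_inner_smul_left, real_inner_self_eq_norm_sq, hη]
    linarith
  refine (hopen.measure_pos volume hne).trans_le (measure_mono ?_)
  rintro y ⟨hy : ⟪y, η⟫ < 0, hGy⟩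
  constructor
  · have hyη : y ≠ η := by
      rintro rfl
      exact hy.not_ge real_inner_self_nonneg
    exact (mul_pos hGy (Real.rpow_pos_of_pos (norm_pos_iff.2 (sub_ne_zero.2 hyη)) _)).ne'
  · rw [coneCompl, mem_ofPred_eq, Real.cos_pi_div_two, mul_zero]
    exact hy.le

lemma HasPrincipalValue.neg_of_isMax (hα : 0 ≤ α) (hs0 : 0 ≤ s) (hs : s < α) (hη : ‖η‖ = 1)
    {F : Ed d → ℝ} {L : ℝ} (hL : HasPrincipalValue d α η (coneCompl η) F L) (hF : Continuous F)
    (hFb : ∀ y, |F y| ≤ C * (1 + ‖y‖) ^ s) (hmax : ∀ y, F y ≤ F η) (h0 : F 0 < F η) : L < 0 := by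
  obtain ⟨C', hC'⟩ := exists_abs_sub_le_one_add hs0 hFb (F η)
  have hint : ∀ ε, Real.cos ε < 1 →
      IntegrableOn (fun y => (F η - F y) * fracKernel d α η y) (coneCompl η ε) := fun ε hε =>
    integrableOn_coneCompl hα hs hη hε (hF.measurable.const_sub (F η)) fun y => by
      rw [abs_sub_comm]
      exact hC' y
  have hpos := setIntegral_coneCompl_pi_div_two_pos hη (continuous_const.sub hF)
    (fun y => sub_nonneg.2 (hmax y)) (sub_pos.2 h0)
    (hint _ (by rw [Real.cos_pi_div_two]; exact one_pos))
  refine neg_pos.1 (hpos.trans_le (ge_of_tendsto hL.neg ?_))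
  filter_upwards [eventually_cos_lt_one, Ioo_mem_nhdsGT Real.pi_div_two_pos] with ε hε1 hε
  rw [← integral_neg]
  simp only [← neg_mul, neg_sub]
  exact setIntegral_mono_set (hint ε hε1)
    (ae_of_all _ fun y => mul_nonneg (sub_nonneg.2 (hmax y)) (fracKernel_nonneg d α η y))
    (coneCompl_subset_coneCompl η hε.1.le hε.2.le (by linarith [Real.pi_pos])).eventuallyLE

lemma HasPrincipalValue.sub_const_mul {F G : Ed d → ℝ} {L₁ L₂ : ℝ} (a : ℝ) (hα : 0 ≤ α)
    (hs0 : 0 ≤ s) (hs : s < α) (hη : ‖η‖ = 1) (hF : Measurable F) (hG : Measurable G)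
    (hFb : ∃ C, ∀ y, |F y| ≤ C * (1 + ‖y‖) ^ s) (hGb : ∃ C, ∀ y, |G y| ≤ C * (1 + ‖y‖) ^ s)
    (hL₁ : HasPrincipalValue d α η (coneCompl η) F L₁)
    (hL₂ : HasPrincipalValue d α η (coneCompl η) G L₂) :
    HasPrincipalValue d α η (coneCompl η) (fun y => F y - a * G y) (L₁ - a * L₂) := by
  obtain ⟨C₁, hC₁⟩ := hFb.elim fun _ h => exists_abs_sub_le_one_add hs0 h (F η)
  obtain ⟨C₂, hC₂⟩ := hGb.elim fun _ h => exists_abs_sub_le_one_add hs0 h (G η)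
  refine (hL₁.sub (hL₂.const_mul a)).congr' ?_
  filter_upwards [eventually_cos_lt_one] with ε hε
  have hFint := integrableOn_coneCompl hα hs hη hε (hF.sub_const (F η)) hC₁
  have hGint := integrableOn_coneCompl hα hs hη hε (hG.sub_const (G η)) hC₂
  rw [← integral_const_mul, ← integral_sub hFint (hGint.const_mul a)]
  congr! 2 with y
  ring

theorem degree_le_of_sub_of_super {p q : ℝ} (hα : 0 ≤ α) (hp : 0 < p) (hq : 0 < q) (hqα : q < α)
    {φ ψ : Ed d → ℝ} (hφ : ContinuousOn φ (sphere 0 1)) (hψ : ContinuousOn ψ (sphere 0 1))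
    (hψ0 : ∀ θ ∈ sphere (0 : Ed d) 1, 0 ≤ ψ θ) (hφψ : ∀ θ ∈ sphere (0 : Ed d) 1, φ θ ≤ C * ψ θ)
    (hpos : ∃ θ ∈ sphere (0 : Ed d) 1, 0 < φ θ)
    (hsub : ∀ η ∈ sphere (0 : Ed d) 1, 0 < φ η →
      ∃ L ≥ 0, HasPrincipalValue d α η (coneCompl η) (homogExt p φ) L)
    (hsuper : ∀ η ∈ sphere (0 : Ed d) 1, 0 < φ η →
      ∃ L ≤ 0, HasPrincipalValue d α η (coneCompl η) (homogExt q ψ) L) : q ≤ p := by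
  by_contra! hpq
  obtain ⟨a, ha, η, hηS, hηpos, hmax⟩ := exists_isMax_homogExt_sub hp hpq hφ hψ hψ0 hφψ hpos
  have hη := mem_sphere_zero_iff_norm.1 hηS
  have hφη : 0 < φ η := by
    rw [homogExt_of_unit hη, homogExt_of_unit hη] at hηpos
    linarith [mul_nonneg ha.le (hψ0 η hηS)]
  obtain ⟨L₁, hL₁, hP⟩ := hsub η hηS hφη
  obtain ⟨L₂, hL₂, hQ⟩ := hsuper η hηS hφη
  have hPc := continuous_homogExt hp hφ
  have hQc := continuous_homogExt hq hψ
  have hPb := exists_abs_homogExt_le_one_add hp hpq.le hφ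
  have hQb := exists_abs_homogExt_le_one_add hq le_rfl hψ
  obtain ⟨C', hC'⟩ := exists_abs_sub_const_mul_le hPb hQb a
  have hlim := hP.sub_const_mul a hα hq.le hqα hη hPc.measurable hQc.measurable hPb hQb hQ
  have hneg : L₁ - a * L₂ < 0 := by
    refine hlim.neg_of_isMax hα hq.le hqα hη (hPc.sub (continuous_const.mul hQc)) hC' hmax ?_
    rwa [homogExt_zero hp.ne', homogExt_zero hq.ne', mul_zero, sub_zero]
  linarith [mul_nonpos_of_nonneg_of_nonpos ha.le hL₂]

end ConeMaximumPrinciple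

/-! ### Comparable profiles and circular cones -/

section Comparable

variable {x y δ k k' : ℝ}

lemma pos_iff_of_comparable (hk : 0 < k) (hx : k⁻¹ * δ ≤ x ∧ x ≤ k * δ) : 0 < x ↔ 0 < δ :=
  ⟨fun h => pos_of_mul_pos_right (h.trans_le hx.2) hk.le,
    fun h => (mul_pos (inv_pos.2 hk) h).trans_le hx.1⟩

lemma le_mul_of_comparable (hk : 0 ≤ k) (hk' : 0 < k') (hx : x ≤ k * δ) (hy : k'⁻¹ * δ ≤ y) :
    x ≤ k * k' * y := by
  rw [inv_mul_le_iff₀ hk'] at hy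
  exact (hx.trans (mul_le_mul_of_nonneg_left hy hk)).trans_eq (mul_assoc k k' y).symm

lemma infDist_compl_rpow_pos_iff {X : Type*} [PseudoMetricSpace X] {Γ : Set X} {γ : ℝ}
    (hΓ : IsOpen Γ) (hΓc : Γᶜ.Nonempty) (hγ : γ ≠ 0) (θ : X) :
    0 < infDist θ Γᶜ ^ γ ↔ θ ∈ Γ := by
  rw [← not_iff_not, not_lt, (Real.rpow_nonneg infDist_nonneg γ).ge_iff_eq',
    Real.rpow_eq_zero infDist_nonneg hγ, ← mem_compl_iff,
    hΓ.isClosed_compl.mem_iff_infDist_zero hΓc]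

end Comparable

section Cone

lemma continuous_lastCoord (d : ℕ) : Continuous (lastCoord d) := by
  unfold lastCoord
  split_ifs <;> fun_prop

lemma isOpen_cone (d : ℕ) (Θ : ℝ) : IsOpen (cone d Θ) :=
  isOpen_lt (by fun_prop) (continuous_lastCoord d)

lemma zero_notMem_cone (d : ℕ) (Θ : ℝ) : (0 : Ed d) ∉ cone d Θ := by
  simp [cone, lastCoord]

lemma capB_eq_unitSphere_inter_cone (d : ℕ) (Θ : ℝ) : capB d Θ = unitSphere d ∩ cone d Θ := by
  ext θ
  refine and_congr_right fun hθ => ?_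
  rw [cone, mem_ofPred_eq, mem_sphere_zero_iff_norm.1 hθ, one_mul]

lemma eLast_mem_capB {d : ℕ} {Θ : ℝ} (hd : 0 < d) (hΘ : Θ ∈ Ioo (0 : ℝ) π) :
    eLast d ∈ capB d Θ := by
  have hcos : Real.cos Θ < 1 := by
    simpa using Real.cos_lt_cos_of_nonneg_of_le_pi le_rfl hΘ.2.le hΘ.1
  constructor
  · simp [eLast, unitSphere, hd]
  · simpa [lastCoord, eLast, hd] using hcos

end Cone

lemma hasPrincipalValue_coneCompl_of_homogeneous {d : ℕ} {α β L : ℝ} {M : Ed d → ℝ} {η : Ed d}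
    (hd : 2 ≤ d) (hα : 0 < α) (hα2 : α < 2) (hβ0 : 0 < β) (hβ : β < α) (hη : ‖η‖ = 1)
    (hMc : Continuous M) (hMC2 : ContDiffAt ℝ 2 M η)
    (hMhom : ∀ r : ℝ, 0 < r → ∀ x : Ed d, x ≠ 0 → M (r • x) = r ^ β * M x)
    (hL : fracLapAt d α M η L) :
    HasPrincipalValue d α η (coneCompl η) (homogExt β M) ((fracConst d α)⁻¹ * L) := by
  have : NeZero d := ⟨by omega⟩
  have hM := homogExt_eq_self hβ0 hMc hMhom
  obtain ⟨C, hC⟩ := exists_abs_homogExt_le_one_add hβ0 le_rfl hMc.continuousOn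
  rw [hM] at hC ⊢
  exact hasPrincipalValue_coneCompl_of_fracLapAt hd hα hα2 hβ0.le hβ hη hMc.measurable hC hMC2 hL

theorem beta_estimates_general (d : ℕ) (hd : 2 ≤ d) (α : ℝ) (hα : 0 < α) (hα2 : α < 2)
    (Γ : Set (Ed d)) (hΓ : IsOpen Γ) (hΓc : Γᶜ.Nonempty) (hΓs : (unitSphere d ∩ Γ).Nonempty)
    (γ : ℝ) (hγ : 0 < γ) (β : ℝ) (hβ : β ∈ Ioo (0 : ℝ) α) (κ κ' : ℝ) (hκ : 0 < κ) (hκ' : 0 < κ')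
    (M : Ed d → ℝ) (hMc : Continuous M) (hMC2 : ContDiffOn ℝ 2 M Γ)
    (hMhom : ∀ r : ℝ, 0 < r → ∀ x : Ed d, x ≠ 0 → M (r • x) = r ^ β * M x)
    (hMharm : ∀ x ∈ Γ, fracLapAt d α M x 0)
    (hMcomp : ∀ θ ∈ unitSphere d,
      κ⁻¹ * infDist θ Γᶜ ^ γ ≤ M θ ∧ M θ ≤ κ * infDist θ Γᶜ ^ γ)
    (φ : Ed d → ℝ) (hφc : ContinuousOn φ (unitSphere d))
    (hφcomp : ∀ θ ∈ unitSphere d,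
      κ'⁻¹ * infDist θ Γᶜ ^ γ ≤ φ θ ∧ φ θ ≤ κ' * infDist θ Γᶜ ^ γ)
    (lam : ℝ) (hlam : lam ∈ Ioo (0 : ℝ) α) :
    ((∀ η ∈ unitSphere d ∩ Γ, ∃ L : ℝ, sphFracLapAt d α φ η L ∧
        IntegrableOn (RopIntegrand d α lam φ η) (unitSphere d) (sphMeasure d) ∧
        0 ≤ L + Rop d α lam φ η) → β ≤ lam) ∧
    ((∀ η ∈ unitSphere d ∩ Γ, ∃ L : ℝ, sphFracLapAt d α φ η L ∧
        IntegrableOn (RopIntegrand d α lam φ η) (unitSphere d) (sphMeasure d) ∧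
        L + Rop d α lam φ η ≤ 0) → lam ≤ β) := by
  have hδ0 : ∀ θ, 0 ≤ infDist θ Γᶜ ^ γ := fun θ => Real.rpow_nonneg infDist_nonneg γ
  have hδ := infDist_compl_rpow_pos_iff hΓ hΓc hγ.ne'
  have hM : ∀ θ ∈ unitSphere d, (0 < M θ ↔ θ ∈ Γ) := fun θ hθ =>
    (pos_iff_of_comparable hκ (hMcomp θ hθ)).trans (hδ θ)
  have hφ : ∀ θ ∈ unitSphere d, (0 < φ θ ↔ θ ∈ Γ) := fun θ hθ =>
    (pos_iff_of_comparable hκ' (hφcomp θ hθ)).trans (hδ θ)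
  have hM0 : ∀ θ ∈ unitSphere d, 0 ≤ M θ := fun θ hθ =>
    (mul_nonneg (inv_nonneg.2 hκ.le) (hδ0 θ)).trans (hMcomp θ hθ).1
  have hφ0 : ∀ θ ∈ unitSphere d, 0 ≤ φ θ := fun θ hθ =>
    (mul_nonneg (inv_nonneg.2 hκ'.le) (hδ0 θ)).trans (hφcomp θ hθ).1
  have hMpv : ∀ η ∈ unitSphere d ∩ Γ,
      HasPrincipalValue d α η (coneCompl η) (homogExt β M) 0 := fun η ⟨hη, hηΓ⟩ => by
    simpa using hasPrincipalValue_coneCompl_of_homogeneous hd hα hα2 hβ.1 hβ.2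
      (mem_sphere_zero_iff_norm.1 hη) hMc (hMC2.contDiffAt (hΓ.mem_nhds hηΓ)) hMhom (hMharm η hηΓ)
  obtain ⟨θ₀, hθ₀, hθ₀Γ⟩ := hΓs
  constructor <;> intro h
  · refine degree_le_of_sub_of_super hα.le hlam.1 hβ.1 hβ.2 hφc hMc.continuousOn hM0
      (fun θ hθ => le_mul_of_comparable hκ'.le hκ (hφcomp θ hθ).2 (hMcomp θ hθ).1)
      ⟨θ₀, hθ₀, (hφ θ₀ hθ₀).2 hθ₀Γ⟩ (fun η hη hφη => ?_)
      fun η hη hφη => ⟨0, le_rfl, hMpv η ⟨hη, (hφ η hη).1 hφη⟩⟩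
    obtain ⟨L, hL, hR, hLR⟩ := h η ⟨hη, (hφ η hη).1 hφη⟩
    obtain ⟨c, hc, hlim⟩ := exists_hasPrincipalValue_coneCompl_homogExt hd hα hα2 hlam.1 hlam.2 hφc
      (mem_sphere_zero_iff_norm.1 hη) hL hR
    exact ⟨_, mul_nonneg hc.le hLR, hlim⟩
  · refine degree_le_of_sub_of_super hα.le hβ.1 hlam.1 hlam.2 hMc.continuousOn hφc hφ0
      (fun θ hθ => le_mul_of_comparable hκ.le hκ' (hMcomp θ hθ).2 (hφcomp θ hθ).1)
      ⟨θ₀, hθ₀, (hM θ₀ hθ₀).2 hθ₀Γ⟩ (fun η hη hMη => ⟨0, le_rfl, hMpv η ⟨hη, (hM η hη).1 hMη⟩⟩)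
      fun η hη hMη => ?_
    obtain ⟨L, hL, hR, hLR⟩ := h η ⟨hη, (hM η hη).1 hMη⟩
    obtain ⟨c, hc, hlim⟩ := exists_hasPrincipalValue_coneCompl_homogExt hd hα hα2 hlam.1 hlam.2 hφc
      (mem_sphere_zero_iff_norm.1 hη) hL hR
    exact ⟨_, mul_nonpos_of_nonneg_of_nonpos hc.le hLR, hlim⟩

/-- comparison of the homogeneity degree `β` of the Martin kernel with `λ`,
via sub/superharmonic spherical profiles. -/
theorem beta_estimates (d : ℕ) (hd : 2 ≤ d) (α : ℝ) (hα : 0 < α) (hα2 : α < 2)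
    (Θ : ℝ) (hΘ : Θ ∈ Set.Ioo (0 : ℝ) π) (β : ℝ) (hβ : β ∈ Set.Ioo (0 : ℝ) α)
    (κ κ' : ℝ) (hκ : 1 ≤ κ) (hκ' : 1 ≤ κ')
    (M : Ed d → ℝ) (hMc : Continuous M) (hMpos : ∀ x, 0 ≤ M x)
    (hMz : ∀ x, x ∉ cone d Θ → M x = 0)
    (hMC2 : ContDiffOn ℝ 2 M (cone d Θ))
    (hMhom : ∀ r : ℝ, 0 < r → ∀ x : Ed d, x ≠ 0 → M (r • x) = r ^ β * M x)
    (hMharm : ∀ x ∈ cone d Θ, fracLapAt d α M x 0)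
    (hMcomp : ∀ θ ∈ unitSphere d,
      κ⁻¹ * Metric.infDist θ (cone d Θ)ᶜ ^ (α / 2) ≤ M θ ∧
        M θ ≤ κ * Metric.infDist θ (cone d Θ)ᶜ ^ (α / 2))
    (φ : Ed d → ℝ) (hφc : ContinuousOn φ (unitSphere d))
    (hφC2 : ∀ η ∈ capB d Θ, ContDiffAt ℝ 2 (fun x : Ed d => φ (‖x‖⁻¹ • x)) η)
    (hφcomp : ∀ θ ∈ unitSphere d,
      κ'⁻¹ * Metric.infDist θ (cone d Θ)ᶜ ^ (α / 2) ≤ φ θ ∧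
        φ θ ≤ κ' * Metric.infDist θ (cone d Θ)ᶜ ^ (α / 2))
    (lam : ℝ) (hlam : lam ∈ Set.Ioo (0 : ℝ) α) :
    ((∀ η ∈ capB d Θ, ∃ L : ℝ, sphFracLapAt d α φ η L ∧
        IntegrableOn (RopIntegrand d α lam φ η) (unitSphere d) (sphMeasure d) ∧
        0 ≤ L + Rop d α lam φ η) → β ≤ lam) ∧
    ((∀ η ∈ capB d Θ, ∃ L : ℝ, sphFracLapAt d α φ η L ∧
        IntegrableOn (RopIntegrand d α lam φ η) (unitSphere d) (sphMeasure d) ∧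
        L + Rop d α lam φ η ≤ 0) → lam ≤ β) := by
  rw [capB_eq_unitSphere_inter_cone]
  exact beta_estimates_general d hd α hα hα2 (cone d Θ) (isOpen_cone d Θ)
    ⟨0, zero_notMem_cone d Θ⟩
    (capB_eq_unitSphere_inter_cone d Θ ▸ ⟨eLast d, eLast_mem_capB (by omega) hΘ⟩)
    (α / 2) (by positivity) β hβ κ κ' (by positivity) (by positivity) M hMc hMC2 hMhom hMharm
    hMcomp φ hφc hφcomp lam hlam
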